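/- arXiv:2010.04299 — 6 statements merged into one kernel-verified Lean document; each statement's English description precedes it below -/
import Mathlib

section
/- Let n ≥ 2 be an even integer and α > 0 a real number. Define λ_k(α,n) = 2 ∑_{j=1}^{n−1} j^{−α} cos(2πkj/n) for k ∈ {0,…,n−1}. Then λ_0(α,n) ≥ λ_k(α,n) ≥ λ_{n/2}(α,n) for every k ∈ {0,…,n−1}; that is, among the eigenvalues of the long-range circulant Hamiltonian, the largest is attained at k = 0 and the smallest at k = n/2. -/
/-- Eigenvalues of the long-range circulant Hamiltonian. -/
noncomputable def lam (α : ℝ) (n k : ℕ) : ℝ :=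
  2 * ∑ j ∈ Finset.Icc 1 (n - 1), (j : ℝ) ^ (-α) * Real.cos (2 * Real.pi * k * j / n)

/-!
Since `Γ(α) j ^ (-α) = ∫₀^∞ t ^ (α - 1) e ^ (-j t) dt`, an inequality between sums with weights
`r ^ j`, valid for all `0 < r < 1`, passes to the weights `j ^ (-α)` for `α > 0`; for `α = 0` let
`r → 1`. With weights `r ^ j` and `n θ ∈ 2πℤ` the cosine sum is geometric, and equals
`(1 - r ^ n) / 2 * (1 + (1 - r ^ 2) / (1 - 2 r cos θ + r ^ 2))`, an increasing function of `cos θ`.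
Hence the eigenvalue at `k` is a monotone function of `cos (2 π k / n)`, which is largest at `k = 0`
and smallest at `k = ⌊n / 2⌋`.
-/

open Finset MeasureTheory Real

section PowerWeights

variable {ι : Type*} {s : Finset ι} {x a b : ι → ℝ} {α : ℝ}

lemma integral_rpow_mul_exp_neg_mul_eq_rpow_neg_mul_Gamma {y : ℝ} (hα : 0 < α) (hy : 0 < y) :
    ∫ t in Set.Ioi (0 : ℝ), t ^ (α - 1) * exp (-(y * t)) = y ^ (-α) * Gamma α := by
  rw [integral_rpow_mul_exp_neg_mul_Ioi hα hy, one_div, inv_rpow hy.le, rpow_neg hy.le]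

lemma integrableOn_rpow_mul_exp_neg_mul {y : ℝ} (hα : 0 < α) (hy : 0 < y) :
    IntegrableOn (fun t : ℝ ↦ t ^ (α - 1) * exp (-(y * t))) (Set.Ioi 0) := by
  simpa using integrableOn_rpow_mul_exp_neg_mul_rpow (by linarith : -1 < α - 1) one_pos hy

lemma sum_rpow_neg_mul_mul_Gamma_eq_integral (hα : 0 < α) (hx : ∀ i ∈ s, 0 < x i) :
    (∑ i ∈ s, x i ^ (-α) * a i) * Gamma α =
      ∫ t in Set.Ioi (0 : ℝ), t ^ (α - 1) * ∑ i ∈ s, exp (-(x i * t)) * a i := by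
  simp only [mul_sum, ← mul_assoc]
  rw [integral_finsetSum _ fun i hi ↦
    (integrableOn_rpow_mul_exp_neg_mul hα (hx i hi)).mul_const _, sum_mul]
  refine sum_congr rfl fun i hi ↦ ?_
  rw [integral_mul_const, integral_rpow_mul_exp_neg_mul_eq_rpow_neg_mul_Gamma hα (hx i hi)]
  ring

lemma sum_le_sum_of_sum_exp_neg_mul_le
    (h : ∀ t > 0, ∑ i ∈ s, exp (-(x i * t)) * a i ≤ ∑ i ∈ s, exp (-(x i * t)) * b i) :
    ∑ i ∈ s, a i ≤ ∑ i ∈ s, b i := by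
  have tendsto_sum (c : ι → ℝ) : Filter.Tendsto (fun t ↦ ∑ i ∈ s, exp (-(x i * t)) * c i)
      (nhdsWithin 0 (Set.Ioi 0)) (nhds (∑ i ∈ s, c i)) := by
    have hcont : Continuous fun t ↦ ∑ i ∈ s, exp (-(x i * t)) * c i := by fun_prop
    simpa using (hcont.tendsto 0).mono_left nhdsWithin_le_nhds
  exact le_of_tendsto_of_tendsto (tendsto_sum a) (tendsto_sum b)
    (eventually_nhdsWithin_of_forall h)

lemma sum_rpow_neg_mul_le_of_sum_exp_neg_mul_le (hα : 0 ≤ α) (hx : ∀ i ∈ s, 0 < x i)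
    (h : ∀ t > 0, ∑ i ∈ s, exp (-(x i * t)) * a i ≤ ∑ i ∈ s, exp (-(x i * t)) * b i) :
    ∑ i ∈ s, x i ^ (-α) * a i ≤ ∑ i ∈ s, x i ^ (-α) * b i := by
  obtain rfl | hα := hα.eq_or_lt
  · simpa using sum_le_sum_of_sum_exp_neg_mul_le h
  rw [← sub_nonneg, ← sum_sub_distrib]
  simp only [← mul_sub]
  refine nonneg_of_mul_nonneg_left ?_ (Gamma_pos_of_pos hα)
  rw [sum_rpow_neg_mul_mul_Gamma_eq_integral hα hx]
  refine setIntegral_nonneg measurableSet_Ioi fun t ht ↦ mul_nonneg (rpow_nonneg ht.le _) ?_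
  simpa only [mul_sub, sum_sub_distrib, sub_nonneg] using h t ht

end PowerWeights

section GeometricWeights

variable {r θ φ : ℝ} {n : ℕ}

lemma one_sub_two_mul_mul_cos_add_sq_pos (hr₀ : 0 ≤ r) (hr₁ : r < 1) :
    0 < 1 - 2 * r * cos θ + r ^ 2 := by
  calc 0 < (1 - r) ^ 2 := pow_pos (sub_pos.2 hr₁) 2
    _ ≤ (1 - r) ^ 2 + 2 * r * (1 - cos θ) :=
      le_add_of_nonneg_right (mul_nonneg (by positivity) (sub_nonneg.2 (cos_le_one θ)))
    _ = 1 - 2 * r * cos θ + r ^ 2 := by ring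

lemma sum_range_pow_mul_cos_mul (r θ : ℝ) (n : ℕ) :
    (∑ j ∈ range n, r ^ j * cos (j * θ)) * (1 - 2 * r * cos θ + r ^ 2) =
      1 - r * cos θ - r ^ n * cos (n * θ) + r ^ (n + 1) * cos (n * θ - θ) := by
  induction n with
  | zero => simp
  | succ n ih =>
    rw [sum_range_succ, add_mul, ih, Nat.cast_succ, add_one_mul, add_sub_cancel_right, cos_add,
      cos_sub]
    ring

lemma sum_range_pow_mul_cos_eq_of_cos_eq_one (hr₀ : 0 ≤ r) (hr₁ : r < 1) (hθ : cos (n * θ) = 1) :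
    ∑ j ∈ range n, r ^ j * cos (j * θ) =
      (1 - r ^ n) / 2 * (1 + (1 - r ^ 2) / (1 - 2 * r * cos θ + r ^ 2)) := by
  have hD := (one_sub_two_mul_mul_cos_add_sq_pos (θ := θ) hr₀ hr₁).ne'
  have hsin : sin (n * θ) = 0 := sin_eq_zero_iff_cos_eq.2 (.inl hθ)
  have hsum := sum_range_pow_mul_cos_mul r θ n
  rw [cos_sub, hθ, hsin] at hsum
  rw [eq_div_of_mul_eq hD hsum, one_add_div hD, mul_div_assoc']
  ring

lemma sum_range_pow_mul_cos_le_of_cos_le (hr₀ : 0 ≤ r) (hr₁ : r < 1)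
    (hθ : cos (n * θ) = 1) (hφ : cos (n * φ) = 1) (h : cos θ ≤ cos φ) :
    ∑ j ∈ range n, r ^ j * cos (j * θ) ≤ ∑ j ∈ range n, r ^ j * cos (j * φ) := by
  rw [sum_range_pow_mul_cos_eq_of_cos_eq_one hr₀ hr₁ hθ,
    sum_range_pow_mul_cos_eq_of_cos_eq_one hr₀ hr₁ hφ]
  have hrn : 0 ≤ 1 - r ^ n := sub_nonneg.2 (pow_le_one₀ hr₀ hr₁.le)
  have hr2 : 0 ≤ 1 - r ^ 2 := sub_nonneg.2 (pow_le_one₀ hr₀ hr₁.le)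
  have hD := one_sub_two_mul_mul_cos_add_sq_pos (θ := φ) hr₀ hr₁
  gcongr

end GeometricWeights

lemma sum_Ico_rpow_neg_mul_cos_le_of_cos_le {α θ φ : ℝ} {n : ℕ} (hα : 0 ≤ α)
    (hθ : cos (n * θ) = 1) (hφ : cos (n * φ) = 1) (h : cos θ ≤ cos φ) :
    ∑ j ∈ Ico 1 n, (j : ℝ) ^ (-α) * cos (j * θ) ≤ ∑ j ∈ Ico 1 n, (j : ℝ) ^ (-α) * cos (j * φ) := by
  obtain rfl | hn := n.eq_zero_or_pos
  · simp
  refine sum_rpow_neg_mul_le_of_sum_exp_neg_mul_le hα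
    (fun j hj ↦ Nat.cast_pos.2 (mem_Ico.1 hj).1) fun t ht ↦ ?_
  have hexp (j : ℕ) : exp (-(j * t)) = exp (-t) ^ j := by rw [← exp_nat_mul, mul_neg]
  have hrange := sum_range_pow_mul_cos_le_of_cos_le (exp_nonneg (-t))
    (exp_lt_one_iff.2 (neg_lt_zero.2 ht)) hθ hφ h
  simpa [hexp, sum_range_eq_add_Ico _ hn] using hrange

lemma lam_eq_sum_Ico (α : ℝ) (n k : ℕ) :
    lam α n k = 2 * ∑ j ∈ Ico 1 n, (j : ℝ) ^ (-α) * cos (j * (2 * π * k / n)) := by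
  have hIcc : Icc 1 (n - 1) = Ico 1 n := by ext; simp only [mem_Icc, mem_Ico]; omega
  simp only [lam, hIcc, mul_div_assoc', mul_comm]

section Frequencies

variable {n : ℕ}

lemma cos_mul_two_pi_mul_div_eq_one (hn : n ≠ 0) (k : ℕ) : cos (n * (2 * π * k / n)) = 1 := by
  rw [mul_div_cancel₀ _ (Nat.cast_ne_zero.2 hn), mul_comm, cos_nat_mul_two_pi]

lemma cos_two_pi_mul_mod_div (hn : n ≠ 0) (k : ℕ) :
    cos (2 * π * (k % n : ℕ) / n) = cos (2 * π * k / n) := by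
  have hangle : 2 * π * k / n = 2 * π * (k % n : ℕ) / n + (k / n : ℕ) * (2 * π) := by
    have hk : (k : ℝ) = (k % n : ℕ) + n * (k / n : ℕ) := mod_cast (Nat.mod_add_div k n).symm
    rw [hk]
    field_simp
  rw [hangle, cos_add_nat_mul_two_pi]

lemma cos_two_pi_mul_sub_div {k : ℕ} (hn : n ≠ 0) (hk : k ≤ n) :
    cos (2 * π * (n - k : ℕ) / n) = cos (2 * π * k / n) := by
  rw [← cos_two_pi_sub]
  congr 1
  push_cast [hk]
  field_simp
  ring

lemma cos_two_pi_mul_half_div_le_of_le_half {k : ℕ} (hn : n ≠ 0) (hk : k ≤ n / 2) :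
    cos (2 * π * (n / 2 : ℕ) / n) ≤ cos (2 * π * k / n) := by
  refine cos_le_cos_of_nonneg_of_le_pi (by positivity) ?_ (by gcongr)
  have hhalf : ((n / 2 : ℕ) : ℝ) ≤ n / 2 := Nat.cast_div_le
  rw [div_le_iff₀ (by positivity)]
  nlinarith [pi_pos]

lemma cos_two_pi_mul_half_div_le (hn : n ≠ 0) (k : ℕ) :
    cos (2 * π * (n / 2 : ℕ) / n) ≤ cos (2 * π * k / n) := by
  have hlt : k % n < n := Nat.mod_lt k (Nat.pos_of_ne_zero hn)
  rw [← cos_two_pi_mul_mod_div hn k]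
  obtain hle | hgt := le_or_gt (k % n) (n / 2)
  · exact cos_two_pi_mul_half_div_le_of_le_half hn hle
  · rw [← cos_two_pi_mul_sub_div hn hlt.le]
    exact cos_two_pi_mul_half_div_le_of_le_half hn (by omega)

end Frequencies

lemma lam_le_lam_of_cos_le {α : ℝ} {n k l : ℕ} (hn : n ≠ 0) (hα : 0 ≤ α)
    (h : cos (2 * π * k / n) ≤ cos (2 * π * l / n)) : lam α n k ≤ lam α n l := by
  rw [lam_eq_sum_Ico, lam_eq_sum_Ico]
  exact mul_le_mul_of_nonneg_left (sum_Ico_rpow_neg_mul_cos_le_of_cos_le hα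
    (cos_mul_two_pi_mul_div_eq_one hn k) (cos_mul_two_pi_mul_div_eq_one hn l) h) zero_le_two

theorem stmt_1_general (n : ℕ) (hn : n ≠ 0) (α : ℝ) (hα : 0 ≤ α) (k : ℕ) :
    lam α n (n / 2) ≤ lam α n k ∧ lam α n k ≤ lam α n 0 :=
  ⟨lam_le_lam_of_cos_le hn hα (cos_two_pi_mul_half_div_le hn k),
    lam_le_lam_of_cos_le hn hα (by simpa using cos_le_one _)⟩

/-- for even `n`, the largest eigenvalue is at `k = 0` and the
smallest at `k = n/2`. -/
theorem stmt_1 (n : ℕ) (hn : 2 ≤ n) (hne : Even n) (α : ℝ) (hα : 0 < α)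
    (k : ℕ) (hk : k < n) :
    lam α n (n / 2) ≤ lam α n k ∧ lam α n k ≤ lam α n 0 :=
  stmt_1_general n (by omega) α hα.le k
end

section
/- Fix a real α > 1 and a real θ with 0 < θ < 2π. Then lim_{n→∞} n^α ∑_{j=0}^∞ e^{ijθ} (j+n)^{−α} = 1/(1 − e^{iθ}); i.e., the Lerch transcendent Φ(z, α, n) = ∑_{j=0}^∞ z^j (j+n)^{−α} with z = e^{iθ} satisfies Φ(z, α, n) ∼ n^{−α}/(1−z) as n → ∞. -/
/-!
Write `S = ∑ a j z ^ j`, where `a j = (j + n) ^ (-α)`. Summation by parts gives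
`(1 - z) S = a 0 - z ∑ (a j - a (j + 1)) z ^ j`. Estimating the last sum by absolute values only
gives `a 0`, which is too large; but `a` is convex, so its differences decrease, and a second
summation by parts bounds `1 - z` times that sum by a multiple of `a 0 - a 1 = o(a 0)`.
All this needs of `z` is that its powers are bounded and that `1 - z` is invertible, so `z` may be
an element of a real Banach algebra.
-/

open Filter Set Topology
open scoped Ring

section Telescoping

variable {G : Type*} [AddCommGroup G] [TopologicalSpace G] [IsTopologicalAddGroup G] {b : ℕ → G}

theorem summable_sub_succ (hb : Summable b) : Summable fun j => b j - b (j + 1) :=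
  hb.sub ((summable_nat_add_iff 1).2 hb)

theorem tsum_sub_succ [T2Space G] (hb : Summable b) : ∑' j, (b j - b (j + 1)) = b 0 := by
  rw [hb.tsum_sub ((summable_nat_add_iff 1).2 hb), hb.tsum_eq_zero_add, add_sub_cancel_right]

theorem nonneg_of_antitone_of_summable [Preorder G] [OrderClosedTopology G]
    (hanti : Antitone b) (hb : Summable b) (j : ℕ) : 0 ≤ b j :=
  hanti.le_of_tendsto hb.tendsto_atTop_zero j

end Telescoping

section BoundedVectors

variable {ι E : Type*} [SeminormedAddCommGroup E] [NormedSpace ℝ E] {v : ι → E} {b : ι → ℝ} {C : ℝ}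

theorem summable_smul_of_norm_le [CompleteSpace E] (hv : ∀ j, ‖v j‖ ≤ C) (hb : Summable b) :
    Summable fun j => b j • v j := by
  refine .of_norm_bounded (hb.norm.mul_right C) fun j => ?_
  rw [norm_smul]
  exact mul_le_mul_of_nonneg_left (hv j) (norm_nonneg _)

theorem norm_tsum_smul_le_of_norm_le (hv : ∀ j, ‖v j‖ ≤ C) (hb : Summable b)
    (hb0 : ∀ j, 0 ≤ b j) : ‖∑' j, b j • v j‖ ≤ C * ∑' j, b j := by
  rw [← tsum_mul_left]
  refine tsum_of_norm_bounded (hb.mul_left C).hasSum fun j => ?_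
  rw [norm_smul, Real.norm_of_nonneg (hb0 j), mul_comm]
  exact mul_le_mul_of_nonneg_right (hv j) (hb0 j)

end BoundedVectors

theorem one_sub_mul_tsum_smul_pow {R A : Type*} [CommRing R] [Ring A] [Algebra R A]
    [TopologicalSpace A] [IsTopologicalRing A] [T2Space A]
    {b : ℕ → R} {z : A} (hb : Summable fun j => b j • z ^ j) :
    (1 - z) * ∑' j, b j • z ^ j = b 0 • 1 - ∑' j, (b j - b (j + 1)) • z ^ (j + 1) := by
  have tsum_mul : z * ∑' j, b j • z ^ j = ∑' j, b j • z ^ (j + 1) := by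
    simp only [← hb.tsum_mul_left, mul_smul_comm, pow_succ']
  have summable_mul : Summable fun j => b j • z ^ (j + 1) := by
    simpa only [mul_smul_comm, ← pow_succ'] using hb.mul_left z
  have summable_tail : Summable fun j => b (j + 1) • z ^ (j + 1) := (summable_nat_add_iff 1).2 hb
  simp only [sub_smul]
  rw [summable_mul.tsum_sub summable_tail, sub_mul, one_mul, tsum_mul, hb.tsum_eq_zero_add,
    pow_zero]
  abel

section PowerBounded

variable {A : Type*} [NormedRing A] [NormedAlgebra ℝ A] [CompleteSpace A] {z : A} {C : ℝ}
  {b : ℕ → ℝ}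

theorem norm_one_sub_mul_tsum_smul_pow_le (hz : ∀ j, ‖z ^ j‖ ≤ C) (hb : Summable b)
    (hanti : Antitone b) : ‖(1 - z) * ∑' j, b j • z ^ j‖ ≤ 2 * C * b 0 := by
  have hsum : Summable fun j => b j • z ^ j := summable_smul_of_norm_le hz hb
  have hb0 : 0 ≤ b 0 := nonneg_of_antitone_of_summable hanti hb 0
  have first_le : ‖b 0 • (1 : A)‖ ≤ C * b 0 := by
    rw [norm_smul, Real.norm_of_nonneg hb0, mul_comm]
    exact mul_le_mul_of_nonneg_right (by simpa using hz 0) hb0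
  have differences_le : ‖∑' j, (b j - b (j + 1)) • z ^ (j + 1)‖ ≤ C * b 0 := by
    rw [← tsum_sub_succ hb]
    exact norm_tsum_smul_le_of_norm_le (fun j => hz (j + 1)) (summable_sub_succ hb)
      fun j => sub_nonneg.2 (hanti j.le_succ)
  rw [one_sub_mul_tsum_smul_pow hsum]
  linarith [norm_sub_le (b 0 • (1 : A)) (∑' j, (b j - b (j + 1)) • z ^ (j + 1))]

theorem norm_one_sub_mul_sub_tsum_smul_pow_le (hz : ∀ j, ‖z ^ j‖ ≤ C) (hb : Summable b)
    (hconvex : Antitone fun j => b j - b (j + 1)) :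
    ‖(1 - z) * (b 0 • 1 - (1 - z) * ∑' j, b j • z ^ j)‖ ≤ ‖z‖ * (2 * C * (b 0 - b 1)) := by
  have hdiff : Summable fun j => b j - b (j + 1) := summable_sub_succ hb
  have hsum : Summable fun j => b j • z ^ j := summable_smul_of_norm_le hz hb
  have hdiff_sum : Summable fun j => (b j - b (j + 1)) • z ^ j := summable_smul_of_norm_le hz hdiff
  have remainder_eq : b 0 • 1 - (1 - z) * ∑' j, b j • z ^ j =
      z * ∑' j, (b j - b (j + 1)) • z ^ j := by
    rw [one_sub_mul_tsum_smul_pow hsum, sub_sub_cancel, ← hdiff_sum.tsum_mul_left]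
    simp only [mul_smul_comm, pow_succ']
  calc ‖(1 - z) * (b 0 • 1 - (1 - z) * ∑' j, b j • z ^ j)‖
      = ‖z * ((1 - z) * ∑' j, (b j - b (j + 1)) • z ^ j)‖ := by
        rw [remainder_eq]
        noncomm_ring
    _ ≤ ‖z‖ * ‖(1 - z) * ∑' j, (b j - b (j + 1)) • z ^ j‖ := norm_mul_le _ _
    _ ≤ ‖z‖ * (2 * C * (b 0 - b 1)) := by
        gcongr
        exact norm_one_sub_mul_tsum_smul_pow_le hz hdiff hconvex

theorem norm_one_sub_mul_one_sub_inv_smul_tsum_smul_pow_le (hz : ∀ j, ‖z ^ j‖ ≤ C)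
    (hb : Summable b) (hconvex : Antitone fun j => b j - b (j + 1)) (hb0 : b 0 ≠ 0) :
    ‖(1 - z) * (1 - (1 - z) * ((b 0)⁻¹ • ∑' j, b j • z ^ j))‖ ≤
      ‖z‖ * (2 * C) * |1 - b 1 / b 0| := by
  have hC : 0 ≤ C := (norm_nonneg _).trans (hz 0)
  calc ‖(1 - z) * (1 - (1 - z) * ((b 0)⁻¹ • ∑' j, b j • z ^ j))‖
      = |(b 0)⁻¹| * ‖(1 - z) * (b 0 • 1 - (1 - z) * ∑' j, b j • z ^ j)‖ := by
        rw [← Real.norm_eq_abs, ← norm_smul, ← mul_smul_comm, smul_sub, inv_smul_smul₀ hb0,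
          mul_smul_comm (b 0)⁻¹ (1 - z) (∑' j, _)]
    _ ≤ |(b 0)⁻¹| * (‖z‖ * (2 * C * |b 0 - b 1|)) := by
        gcongr
        refine (norm_one_sub_mul_sub_tsum_smul_pow_le hz hb hconvex).trans ?_
        gcongr
        exact le_abs_self _
    _ = ‖z‖ * (2 * C) * |1 - b 1 / b 0| := by
        rw [one_sub_div hb0, abs_div, abs_inv]
        ring

theorem tendsto_inv_smul_tsum_smul_pow {ι : Type*} {l : Filter ι} {a : ι → ℕ → ℝ}
    (hz : ∀ j, ‖z ^ j‖ ≤ C) (hz1 : IsUnit (1 - z)) (hsum : ∀ᶠ i in l, Summable (a i))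
    (hconvex : ∀ᶠ i in l, Antitone fun j => a i j - a i (j + 1))
    (hratio : Tendsto (fun i => a i 1 / a i 0) l (𝓝 1)) :
    Tendsto (fun i => (a i 0)⁻¹ • ∑' j, a i j • z ^ j) l (𝓝 (1 - z)⁻¹ʳ) := by
  have hne : ∀ᶠ i in l, a i 0 ≠ 0 :=
    (hratio.eventually_ne one_ne_zero).mono fun i hi => (div_ne_zero_iff.1 hi).2
  have bound_tendsto : Tendsto (fun i => ‖z‖ * (2 * C) * |1 - a i 1 / a i 0|) l (𝓝 0) := by
    simpa using (hratio.const_sub 1).abs.const_mul (‖z‖ * (2 * C))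
  have error_tendsto : Tendsto
      (fun i => (1 - z) * (1 - (1 - z) * ((a i 0)⁻¹ • ∑' j, a i j • z ^ j))) l (𝓝 0) := by
    refine squeeze_zero_norm' ?_ bound_tendsto
    filter_upwards [hsum, hconvex, hne] with i hsum hconvex hne
    exact norm_one_sub_mul_one_sub_inv_smul_tsum_smul_pow_le hz hsum hconvex hne
  have solved := ((error_tendsto.const_mul (1 - z)⁻¹ʳ).const_sub 1).const_mul (1 - z)⁻¹ʳ
  simpa only [Ring.inverse_mul_cancel_left _ _ hz1, sub_sub_cancel, mul_zero, sub_zero, mul_one]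
    using solved

end PowerBounded

section Rpow

theorem convexOn_rpow_of_nonpos {p : ℝ} (hp : p ≤ 0) : ConvexOn ℝ (Ioi 0) fun x : ℝ => x ^ p := by
  have hlog : ConvexOn ℝ (Ioi 0) fun x => p * Real.log x := by
    simpa [Pi.neg_def] using strictConcaveOn_log_Ioi.concaveOn.neg.smul (neg_nonneg.2 hp)
  have hcont : ContinuousOn (fun x => p * Real.log x) (Ioi 0) :=
    (Real.continuousOn_log.mono fun x hx => (mem_Ioi.1 hx).ne').const_mul p
  have hexp : ConvexOn ℝ ((fun x => p * Real.log x) '' Ioi 0) Real.exp :=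
    convexOn_exp.subset (subset_univ _) (isPreconnected_Ioi.image _ hcont).ordConnected.convex
  refine (hexp.comp hlog (Real.exp_monotone.monotoneOn _)).congr fun x hx => ?_
  rw [Function.comp_apply, Real.rpow_def_of_pos hx, mul_comm]

theorem antitone_sub_succ_of_convexOn {f : ℝ → ℝ} {x : ℝ} (hf : ConvexOn ℝ (Ici x) f) :
    Antitone fun j : ℕ => f (j + x) - f ((j + 1 : ℕ) + x) := by
  refine antitone_nat_of_succ_le fun j => ?_
  have slope_le := hf.slope_mono_adjacent (x := j + x) (y := (j + 1 : ℕ) + x)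
    (z := (j + 1 + 1 : ℕ) + x) (by simp)
    (by simp only [mem_Ici, le_add_iff_nonneg_left]; positivity) (by simp) (by simp)
  push_cast at slope_le ⊢
  ring_nf at slope_le ⊢
  linarith

theorem summable_nat_add_rpow_neg {α x : ℝ} (hα : 1 < α) (hx : 0 ≤ x) :
    Summable fun j : ℕ => ((j : ℝ) + x) ^ (-α) := by
  refine ((Real.summable_one_div_nat_add_rpow x α).2 hα).congr fun j => ?_
  rw [abs_of_nonneg (by positivity), Real.rpow_neg (by positivity), one_div]

theorem tendsto_one_add_rpow_div_rpow_atTop (p : ℝ) :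
    Tendsto (fun x : ℝ => (1 + x) ^ p / x ^ p) atTop (𝓝 1) := by
  have base : Tendsto (fun x : ℝ => x⁻¹ + 1) atTop (𝓝 1) := by
    simpa using tendsto_inv_atTop_zero.add_const (1 : ℝ)
  have power := base.rpow_const (p := p) (.inl one_ne_zero)
  rw [Real.one_rpow] at power
  refine power.congr' ?_
  filter_upwards [eventually_gt_atTop 0] with x hx
  rw [← Real.div_rpow (by positivity) hx.le, add_div, div_self hx.ne', one_div]

end Rpow

theorem exp_ofReal_mul_I_ne_one {θ : ℝ} (hθ : θ ≠ 0) (hlb : -(2 * Real.pi) < θ)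
    (hub : θ < 2 * Real.pi) : Complex.exp (θ * Complex.I) ≠ 1 := by
  intro h
  have cos_eq_one : Real.cos θ = 1 := by
    simpa [Complex.exp_ofReal_mul_I_re] using congrArg Complex.re h
  exact hθ ((Real.cos_eq_one_iff_of_lt_of_lt hlb hub).1 cos_eq_one)

theorem stmt_6_general {A : Type*} [NormedRing A] [NormedAlgebra ℝ A] [CompleteSpace A]
    {α C : ℝ} (hα : 1 < α) {z : A} (hz : ∀ j : ℕ, ‖z ^ j‖ ≤ C) (hz1 : IsUnit (1 - z)) :
    Tendsto (fun x : ℝ => x ^ α • ∑' j : ℕ, (j + x) ^ (-α) • z ^ j) atTop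
      (𝓝 (1 - z)⁻¹ʳ) := by
  have hpos : ∀ᶠ x : ℝ in atTop, 0 < x := eventually_gt_atTop 0
  refine (tendsto_inv_smul_tsum_smul_pow (a := fun x j => (j + x) ^ (-α)) hz hz1 ?_ ?_ ?_).congr' ?_
  · exact hpos.mono fun x hx => summable_nat_add_rpow_neg hα hx.le
  · exact hpos.mono fun x hx => antitone_sub_succ_of_convexOn <|
      (convexOn_rpow_of_nonpos (by linarith)).subset (Ici_subset_Ioi.2 hx) (convex_Ici x)
  · simpa using tendsto_one_add_rpow_div_rpow_atTop (-α)
  · filter_upwards [hpos] with x hx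
    simp [Real.rpow_neg hx.le]

/-- for fixed real `α > 1` and `0 < θ < 2π`, the Lerch transcendent
`Φ(e^{iθ}, α, n) = ∑_{j=0}^∞ e^{ijθ} (j+n)^{-α}` satisfies
`lim_{n→∞} n^α Φ(e^{iθ}, α, n) = 1/(1 - e^{iθ})`. -/
theorem stmt_6 (α : ℝ) (hα : 1 < α) (θ : ℝ) (hθ : 0 < θ) (hθ2 : θ < 2 * Real.pi) :
    Filter.Tendsto
      (fun n : ℕ => (((n : ℝ) ^ α : ℝ) : ℂ) *
        ∑' j : ℕ, Complex.exp ((j : ℂ) * (θ : ℂ) * Complex.I)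
          * (((((j : ℝ) + (n : ℝ)) ^ (-α) : ℝ)) : ℂ))
      Filter.atTop
      (nhds (1 / (1 - Complex.exp ((θ : ℂ) * Complex.I)))) := by
  have hunit : IsUnit (1 - Complex.exp (θ * Complex.I)) :=
    (sub_ne_zero.2 (exp_ofReal_mul_I_ne_one hθ.ne' (by linarith) hθ2).symm).isUnit
  have hlim := (stmt_6_general hα (C := 1) (by simp) hunit).comp tendsto_natCast_atTop_atTop
  simpa only [Function.comp_def, Complex.real_smul, ← Complex.exp_nat_mul, ← mul_assoc, mul_comm,
    Ring.inverse_eq_inv', one_div] using hlim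
end

section
/- Fix a real α with 1 < α < 3/2. For even integers n, define λ_k(α,n) = 2 ∑_{j=1}^{n−1} j^{−α} cos(2πkj/n) and Δ_n(α) = (λ_0(α,n) − λ_1(α,n)) / (λ_0(α,n) − λ_{n/2}(α,n)). Then lim_{n→∞, n even} √n · Δ_n(α) = +∞; i.e., the spectral condition Δ_n(α) ≥ c n^{−1/2} holds for every constant c > 0 once n is large enough. -/
/-- The rescaled spectral gap `Δ_n(α) = (λ_0 - λ_1)/(λ_0 - λ_{n/2})` for even `n`. -/
noncomputable def gap (α : ℝ) (n : ℕ) : ℝ :=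
  (lam α n 0 - lam α n 1) / (lam α n 0 - lam α n (n / 2))

/-!
Since `j ^ (-α) ≥ n ^ (-α)` for `1 ≤ j < n`, and since `1 - cos (2πkj/n)` sums to `n` over a period,
`λ_0 - λ_k ≥ 2 n ^ (1 - α)` whenever `n ∤ k`. For any exponent `β > 1` with `β ≥ α`, the bound
`j ^ (-α) ≤ n ^ (β - α) j ^ (-β)` gives `λ_0 - λ_k ≤ 4 n ^ (β - α) ζ(β)`. Hence
`Δ_n(α) ≥ n ^ (1 - β) / (2 ζ(β))`, and multiplying by `√n` leaves a positive power of `n` as soon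
as `β < 3/2`.
-/

open Filter Finset Real

section TrigonometricSums

variable {n k : ℕ}

theorem sum_range_cos_two_pi_mul_div_eq_zero (hk : ¬ n ∣ k) :
    ∑ j ∈ range n, cos (2 * π * k * j / n) = 0 := by
  rcases eq_or_ne n 0 with rfl | hn
  · exact sum_range_zero _
  have hζ : IsPrimitiveRoot (Complex.exp (2 * π * Complex.I / n)) n :=
    Complex.isPrimitiveRoot_exp n hn
  set z : ℂ := Complex.exp (2 * π * Complex.I / n) ^ k with hz
  have hz_ne_one : z ≠ 1 := fun h => hk ((hζ.pow_eq_one_iff_dvd k).1 h)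
  have hz_pow : z ^ n = 1 := by rw [hz, pow_right_comm, hζ.pow_eq_one, one_pow]
  have hgeom : ∑ j ∈ range n, z ^ j = 0 := by
    rw [geom_sum_eq hz_ne_one, hz_pow, sub_self, zero_div]
  have hre (j : ℕ) : cos (2 * π * k * j / n) = (z ^ j).re := by
    rw [hz, ← pow_mul, ← Complex.exp_nat_mul, ← Complex.exp_ofReal_mul_I_re]
    congr 2
    push_cast
    ring
  simp_rw [hre, ← Complex.re_sum, hgeom, Complex.zero_re]

theorem sum_Icc_one_sub_cos_two_pi_mul_div (hk : ¬ n ∣ k) :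
    ∑ j ∈ Icc 1 (n - 1), (1 - cos (2 * π * k * j / n)) = n := by
  have hIcc : Icc 1 (n - 1) = (range n).erase 0 := by
    ext j
    simp only [mem_Icc, mem_erase, mem_range]
    omega
  rw [hIcc, sum_erase _ (by simp), sum_sub_distrib, sum_range_cos_two_pi_mul_div_eq_zero hk]
  simp

end TrigonometricSums

theorem rpow_neg_le_rpow_sub_mul_rpow_neg {x y α β : ℝ} (hx : 0 < x) (hxy : x ≤ y) (hαβ : α ≤ β) :
    x ^ (-α) ≤ y ^ (β - α) * x ^ (-β) :=
  calc x ^ (-α) = x ^ (β - α) * x ^ (-β) := by rw [← rpow_add hx]; ring_nf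
    _ ≤ y ^ (β - α) * x ^ (-β) := by gcongr

theorem tsum_nat_rpow_neg_pos {β : ℝ} (hβ : 1 < β) : 0 < ∑' j : ℕ, (j : ℝ) ^ (-β) :=
  (summable_nat_rpow.2 (neg_lt_neg hβ)).tsum_pos (fun j => by positivity) 1 (by simp)

section Eigenvalues

variable {α β : ℝ} {n k : ℕ}

theorem lam_zero_sub_lam (α : ℝ) (n k : ℕ) :
    lam α n 0 - lam α n k =
      2 * ∑ j ∈ Icc 1 (n - 1), (j : ℝ) ^ (-α) * (1 - cos (2 * π * k * j / n)) := by
  simp [lam, mul_sub]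

theorem two_mul_rpow_le_lam_zero_sub_lam (hα : 0 ≤ α) (hn : n ≠ 0) (hk : ¬ n ∣ k) :
    2 * (n : ℝ) ^ (1 - α) ≤ lam α n 0 - lam α n k := by
  have hsum : (n : ℝ) ^ (1 - α) =
      ∑ j ∈ Icc 1 (n - 1), (n : ℝ) ^ (-α) * (1 - cos (2 * π * k * j / n)) := by
    rw [← mul_sum, sum_Icc_one_sub_cos_two_pi_mul_div hk, sub_eq_neg_add,
      rpow_add_one (Nat.cast_ne_zero.2 hn)]
  rw [lam_zero_sub_lam, hsum]
  gcongr 2 * ∑ j ∈ _, ?_ * _ with j hj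
  · exact sub_nonneg.2 (cos_le_one _)
  · rw [mem_Icc] at hj
    exact rpow_le_rpow_of_nonpos (by exact_mod_cast hj.1) (by exact_mod_cast (by omega))
      (neg_nonpos.2 hα)

theorem lam_zero_sub_lam_le (hαβ : α ≤ β) (hβ : 1 < β) :
    lam α n 0 - lam α n k ≤ 4 * (n : ℝ) ^ (β - α) * ∑' j : ℕ, (j : ℝ) ^ (-β) := by
  have hterm : ∀ j ∈ Icc 1 (n - 1), (j : ℝ) ^ (-α) * (1 - cos (2 * π * k * j / n)) ≤
      (n : ℝ) ^ (β - α) * (j : ℝ) ^ (-β) * 2 := by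
    intro j hj
    rw [mem_Icc] at hj
    gcongr
    · exact sub_nonneg.2 (cos_le_one _)
    · exact rpow_neg_le_rpow_sub_mul_rpow_neg (by exact_mod_cast hj.1)
        (by exact_mod_cast (by omega)) hαβ
    · linarith [neg_one_le_cos (2 * π * k * j / n)]
  have hpartial : ∑ j ∈ Icc 1 (n - 1), (j : ℝ) ^ (-β) ≤ ∑' j : ℕ, (j : ℝ) ^ (-β) :=
    (summable_nat_rpow.2 (neg_lt_neg hβ)).sum_le_tsum _ fun j _ => by positivity
  calc lam α n 0 - lam α n k
      ≤ 2 * ∑ j ∈ Icc 1 (n - 1), (n : ℝ) ^ (β - α) * (j : ℝ) ^ (-β) * 2 := by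
        rw [lam_zero_sub_lam]
        gcongr 2 * ?_
        exact sum_le_sum hterm
    _ = 4 * (n : ℝ) ^ (β - α) * ∑ j ∈ Icc 1 (n - 1), (j : ℝ) ^ (-β) := by
        rw [← sum_mul, ← mul_sum]
        ring
    _ ≤ _ := by gcongr

theorem rpow_div_two_mul_tsum_le_gap (hn : 2 ≤ n) (hα : 0 ≤ α) (hαβ : α ≤ β) (hβ : 1 < β) :
    (n : ℝ) ^ (1 - β) / (2 * ∑' j : ℕ, (j : ℝ) ^ (-β)) ≤ gap α n := by
  have hn_ne : n ≠ 0 := by omega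
  have hn_pos : (0 : ℝ) < n := by positivity
  have hnum : 2 * (n : ℝ) ^ (1 - α) ≤ lam α n 0 - lam α n 1 :=
    two_mul_rpow_le_lam_zero_sub_lam hα hn_ne (Nat.not_dvd_of_pos_of_lt one_pos hn)
  have hden : 2 * (n : ℝ) ^ (1 - α) ≤ lam α n 0 - lam α n (n / 2) :=
    two_mul_rpow_le_lam_zero_sub_lam hα hn_ne (Nat.not_dvd_of_pos_of_lt (by omega) (by omega))
  have hpow_pos : 0 < 2 * (n : ℝ) ^ (1 - α) := by positivity
  calc (n : ℝ) ^ (1 - β) / (2 * ∑' j : ℕ, (j : ℝ) ^ (-β))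
      = 2 * (n : ℝ) ^ (1 - α) / (4 * (n : ℝ) ^ (β - α) * ∑' j : ℕ, (j : ℝ) ^ (-β)) := by
        rw [show 1 - α = (1 - β) + (β - α) by ring, rpow_add hn_pos]
        have htsum_ne := (tsum_nat_rpow_neg_pos hβ).ne'
        field_simp
        ring
    _ ≤ gap α n :=
        div_le_div₀ (hpow_pos.le.trans hnum) hnum (hpow_pos.trans_le hden)
          (lam_zero_sub_lam_le hαβ hβ)

end Eigenvalues

/-- For odd `n` the division in `gap` truncates, so its denominator is `λ_0 - λ_{(n - 1)/2}`. -/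
theorem stmt_9_general {α : ℝ} (hα : 0 ≤ α) (hα' : α < 3 / 2) :
    Tendsto (fun n : ℕ => √n * gap α n) atTop atTop := by
  obtain ⟨β, hβ, hβ'⟩ : ∃ β, max α 1 < β ∧ β < 3 / 2 := exists_between (by norm_num [hα'])
  obtain ⟨hαβ, hβ_one⟩ := max_lt_iff.1 hβ
  set C : ℝ := 2 * ∑' j : ℕ, (j : ℝ) ^ (-β)
  have hC : 0 < C := mul_pos two_pos (tsum_nat_rpow_neg_pos hβ_one)
  have hlim : Tendsto (fun n : ℕ => (n : ℝ) ^ (3 / 2 - β) / C) atTop atTop :=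
    ((tendsto_rpow_atTop (sub_pos.2 hβ')).comp tendsto_natCast_atTop_atTop).atTop_div_const hC
  refine tendsto_atTop_mono' _ ?_ hlim
  filter_upwards [eventually_ge_atTop 2] with n hn
  have hn_pos : (0 : ℝ) < n := by positivity
  calc (n : ℝ) ^ (3 / 2 - β) / C = √n * ((n : ℝ) ^ (1 - β) / C) := by
        rw [sqrt_eq_rpow, ← mul_div_assoc, ← rpow_add hn_pos]
        ring_nf
    _ ≤ √n * gap α n := by
        gcongr
        exact rpow_div_two_mul_tsum_le_gap hn hα hαβ.le hβ_one

/-- for `1 < α < 3/2`, `√n · Δ_n(α) → +∞` along even `n`; hence the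
spectral condition `Δ_n(α) ≥ c n^{-1/2}` holds for every `c > 0` for large `n`. -/
theorem stmt_9 (α : ℝ) (h1 : 1 < α) (h2 : α < 3 / 2) :
    Filter.Tendsto (fun n : ℕ => Real.sqrt ((2 * n : ℕ) : ℝ) * gap α (2 * n))
      Filter.atTop Filter.atTop :=
  (stmt_9_general (zero_le_one.trans h1.le) h2).comp (tendsto_id.const_mul_atTop' two_pos)
end

section
/- Let α be a real number with 1 < α < 3 and α ≠ 2. Define f(α) = (4 − 2^{2−α}) ζ(α) and g_0(α) = −2^α π^{α−1} sin(απ/2) Γ(1−α). Then |f(α)/g_0(α)| < 1; equivalently, |(4 − 2^{2−α}) ζ(α)| < |2^α π^{α−1} sin(απ/2) Γ(1−α)|. -/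
/-- The Riemann zeta function at a real argument. -/
noncomputable def rzeta (x : ℝ) : ℝ := (riemannZeta (x : ℂ)).re

/-- `f(α) = (4 - 2^{2-α}) ζ(α)`. -/
noncomputable def fα (α : ℝ) : ℝ := (4 - (2 : ℝ) ^ (2 - α)) * rzeta α

/-- `g₀(α) = -2^α π^{α-1} sin(απ/2) Γ(1-α)`. -/
noncomputable def g0 (α : ℝ) : ℝ :=
  -(2 : ℝ) ^ α * Real.pi ^ (α - 1) * Real.sin (α * Real.pi / 2) * Real.Gamma (1 - α)

/-! By Euler's reflection formula, `g₀(α) = -(2π)^α / (2 cos(απ/2) Γ(α))`. Since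
`4 - 2^(2-α) ≤ 2^α` by AM-GM, `ζ(α) ≤ α / (α - 1)` by comparison with `∫ x^(-α)`, and
`|cos(απ/2)| ≤ (α - 1)π/2`, all the powers of `2` and the pole of `ζ` cancel, leaving
`|f(α)/g₀(α)| ≤ Γ(α + 1) / π^(α-1)`. The numerator is log-convex in `α` and the denominator is
log-linear; at `α = 1` they agree, and at `α = 3` they are `6 < π²`, so the quotient is less
than `1` in between. -/

section

open Real

lemma rzeta_eq_tsum {s : ℝ} (hs : 1 < s) : rzeta s = ∑' n : ℕ, 1 / (n + 1 : ℝ) ^ s := by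
  have hζ : riemannZeta (s : ℂ) = ((∑' n : ℕ, 1 / (n + 1 : ℝ) ^ s : ℝ) : ℂ) := by
    rw [zeta_eq_tsum_one_div_nat_add_one_cpow (by simpa using hs), Complex.ofReal_tsum]
    congr 1 with n
    rw [Complex.ofReal_div, Complex.ofReal_cpow (by positivity)]
    norm_cast
  rw [rzeta, hζ, Complex.ofReal_re]

lemma rzeta_pos {s : ℝ} (hs : 1 < s) : 0 < rzeta s :=
  riemannZeta_re_pos_of_one_lt hs

lemma rzeta_le_div_sub_one {s : ℝ} (hs : 1 < s) : rzeta s ≤ s / (s - 1) := by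
  have hsub : rzeta s - 1 / (s - 1) = 1 - s * ZetaAsymptotics.termTSum s := by
    rw [rzeta_eq_tsum hs, ZetaAsymptotics.zeta_limit_aux1 hs]
  have hterm : 0 ≤ s * ZetaAsymptotics.termTSum s :=
    mul_nonneg (by linarith) (tsum_nonneg fun n ↦ ZetaAsymptotics.term_nonneg _ _)
  calc rzeta s ≤ 1 + 1 / (s - 1) := by linarith
    _ = s / (s - 1) := by field [sub_ne_zero.2 hs.ne']

lemma four_sub_two_rpow_le_two_rpow (x : ℝ) : 4 - (2 : ℝ) ^ (2 - x) ≤ 2 ^ x := by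
  have hmul : (2 : ℝ) ^ (2 - x) * 2 ^ x = 4 := by
    rw [← rpow_add two_pos, sub_add_cancel]
    norm_num
  have hpos : (0 : ℝ) < 2 ^ x := by positivity
  nlinarith [sq_nonneg ((2 : ℝ) ^ x - 2)]

lemma abs_fα_le {α : ℝ} (hα : 1 < α) : |fα α| ≤ 2 ^ α * (α / (α - 1)) := by
  have hfactor : 0 ≤ 4 - (2 : ℝ) ^ (2 - α) := by
    have hpow : (2 : ℝ) ^ (2 - α) ≤ 2 ^ (2 : ℝ) :=
      rpow_le_rpow_of_exponent_le one_le_two (by linarith)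
    rw [rpow_two] at hpow
    linarith
  rw [fα, abs_of_nonneg (mul_nonneg hfactor (rzeta_pos hα).le)]
  exact mul_le_mul (four_sub_two_rpow_le_two_rpow α) (rzeta_le_div_sub_one hα)
    (rzeta_pos hα).le (by positivity)

/- If `cos (α * π / 2) = 0`, then `1 - α` is a pole of `Γ` and both sides are `0`: the left one
because `Gamma` vanishes at its poles, the right one because `x / 0 = 0`. -/
lemma g0_eq_neg_div {α : ℝ} (hα : 0 < α) (hsin : sin (α * π / 2) ≠ 0) :
    g0 α = -((2 * π) ^ α / (2 * cos (α * π / 2) * Gamma α)) := by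
  have hΓ : Gamma α ≠ 0 := (Gamma_pos_of_pos hα).ne'
  have hreflection : Gamma (1 - α) = π / (2 * sin (α * π / 2) * cos (α * π / 2)) / Gamma α := by
    rw [← sin_two_mul, show 2 * (α * π / 2) = π * α by ring, ← Gamma_mul_Gamma_one_sub,
      mul_div_cancel_left₀ _ hΓ]
  rw [g0, hreflection, rpow_sub_one pi_ne_zero, mul_rpow zero_le_two pi_pos.le]
  field

lemma abs_cos_mul_pi_div_two_le (x : ℝ) : |cos (x * π / 2)| ≤ |x - 1| * (π / 2) := by
  have hcos : cos (x * π / 2) = -sin ((x - 1) * (π / 2)) := by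
    rw [← cos_add_pi_div_two]
    ring_nf
  calc |cos (x * π / 2)| = |sin ((x - 1) * (π / 2))| := by rw [hcos, abs_neg]
    _ ≤ |(x - 1) * (π / 2)| := abs_sin_le_abs
    _ = |x - 1| * (π / 2) := by rw [abs_mul, abs_of_pos pi_div_two_pos]

lemma abs_fα_div_g0_le {α : ℝ} (hα : 1 < α) (hsin : sin (α * π / 2) ≠ 0) :
    |fα α / g0 α| ≤ Gamma (α + 1) / π ^ (α - 1) := by
  have hα0 : 0 < α := by linarith
  have hα1 : 0 < α - 1 := by linarith
  have hΓ : 0 < Gamma α := Gamma_pos_of_pos hα0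
  have hcos := abs_cos_mul_pi_div_two_le α
  rw [abs_of_pos hα1] at hcos
  calc |fα α / g0 α| = |fα α| * (2 * |cos (α * π / 2)| * Gamma α) / (2 * π) ^ α := by
        rw [g0_eq_neg_div hα0 hsin, div_neg, abs_neg, div_div_eq_mul_div, abs_div, abs_mul,
          abs_mul, abs_mul, abs_two, abs_of_pos hΓ,
          abs_of_pos (by positivity : 0 < (2 * π) ^ α)]
    _ ≤ 2 ^ α * (α / (α - 1)) * (2 * ((α - 1) * (π / 2)) * Gamma α) / (2 * π) ^ α := by
        gcongr
        exact abs_fα_le hα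
    _ = Gamma (α + 1) / π ^ (α - 1) := by
        rw [Gamma_add_one hα0.ne', rpow_sub_one pi_ne_zero, mul_rpow zero_le_two pi_pos.le]
        field

lemma Gamma_add_one_lt_rpow_sub_one {b c x : ℝ} (hc : 0 ≤ c) (hx : 1 < x) (hxb : x < b)
    (hb : Gamma (b + 1) < c ^ (b - 1)) : Gamma (x + 1) < c ^ (x - 1) := by
  have hb1 : 0 < b - 1 := by linarith
  set t := (x - 1) / (b - 1)
  have ht0 : 0 < t := div_pos (by linarith) hb1
  have ht1 : 0 < 1 - t := sub_pos.2 ((div_lt_one hb1).2 (by linarith))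
  have hbt : (b - 1) * t = x - 1 := mul_div_cancel₀ _ hb1.ne'
  calc Gamma (x + 1) = Gamma ((1 - t) * 2 + t * (b + 1)) := by
        congr 1
        linear_combination -hbt
    _ ≤ Gamma 2 ^ (1 - t) * Gamma (b + 1) ^ t :=
        Gamma_mul_add_mul_le_rpow_Gamma_mul_rpow_Gamma two_pos (by linarith) ht1 ht0 (by ring)
    _ = Gamma (b + 1) ^ t := by rw [Gamma_two, one_rpow, one_mul]
    _ < (c ^ (b - 1)) ^ t := rpow_lt_rpow (Gamma_nonneg_of_nonneg (by linarith)) hb ht0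
    _ = c ^ (x - 1) := by rw [← rpow_mul hc, hbt]

lemma Gamma_add_one_lt_pi_rpow_sub_one {x : ℝ} (hx : 1 < x) (hx3 : x < 3) :
    Gamma (x + 1) < π ^ (x - 1) := by
  refine Gamma_add_one_lt_rpow_sub_one pi_pos.le hx hx3 ?_
  have hΓ : Gamma (3 + 1) = 6 := by
    simpa [Nat.factorial] using Gamma_nat_eq_factorial 3
  have hpow : π ^ ((3 : ℝ) - 1) = π ^ 2 := by
    rw [← rpow_natCast]
    norm_num
  rw [hΓ, hpow]
  nlinarith [pi_gt_three]

lemma sin_mul_pi_div_two_ne_zero {x : ℝ} (h0 : 0 < x) (h4 : x < 4) (h2 : x ≠ 2) :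
    sin (x * π / 2) ≠ 0 := by
  have hπ := pi_pos
  rw [← neg_ne_zero, ← sin_sub_pi, Ne, sin_eq_zero_iff_of_lt_of_lt (by nlinarith) (by nlinarith)]
  intro h
  exact h2 (mul_right_cancel₀ hπ.ne' (by linarith))

end

/-- Lemma 3 of the SM: `|f(α)/g₀(α)| < 1` for `1 < α < 3`, `α ≠ 2`. -/
theorem stmt_12 (α : ℝ) (h1 : 1 < α) (h3 : α < 3) (h2 : α ≠ 2) :
    |fα α / g0 α| < 1 := by
  have hsin : Real.sin (α * Real.pi / 2) ≠ 0 :=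
    sin_mul_pi_div_two_ne_zero (by linarith) (by linarith) h2
  calc |fα α / g0 α| ≤ Real.Gamma (α + 1) / Real.pi ^ (α - 1) := abs_fα_div_g0_le h1 hsin
    _ < 1 := (div_lt_one (by positivity)).2 (Gamma_add_one_lt_pi_rpow_sub_one h1 h3)
end

section
/- Let α be a real number with 1 < α < 2. Then the series ∑_{m=1}^∞ 2 (−1)^{m+1} ζ(α − 2m) π^{2m} / (2m)! converges and equals (4 − 2^{2−α}) ζ(α) + 2 π^{α−1} sin(απ/2) Γ(1−α), where ζ(α−2m) denotes the analytically continued Riemann zeta function at the negative real point α − 2m. -/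
/-!
Expanding `(n ∓ a) ^ (-w)` in powers of `a / n` and summing over `n ≥ 1` gives, for `1 < re w`,
`∑ (w)_{2m} / (2m)! * a ^ (2m) * ζ(w + 2m) = hurwitzZetaEven a w - a ^ (-w) / 2`, where
`(w)_k / k!` is `Ring.multichoose w k`. The left side converges locally uniformly away from the
poles of its terms, so the identity continues analytically to all other `w`. The functional
equations of `hurwitzZetaEven` and `ζ` at `w = 1 - s` turn it into the expansion
`∑ (-1) ^ m * (2πa) ^ (2m) / (2m)! * ζ(s - 2m) = cosZeta a s - Γ(1 - s) sin(πs/2) (2πa) ^ (s - 1)`.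
For `a = 1 / 2` one has `cosZeta a s = (2 ^ (1 - s) - 1) ζ(s)`, and removing the term `m = 0` and
multiplying by `-2` gives the claim.
-/

open Complex Filter HurwitzZeta
open scoped Real Topology

theorem hasSum_even_of_hasSum_alternating {K : Type*} [Field K] [NeZero (2 : K)]
    [TopologicalSpace K] [IsTopologicalRing K] {f : ℕ → K} {A B : K} (hf : HasSum f A)
    (hf_alt : HasSum (fun n ↦ (-1) ^ n * f n) B) :
    HasSum (fun m ↦ f (2 * m)) ((A + B) / 2) := by
  have hmean : HasSum (fun n ↦ (f n + (-1) ^ n * f n) / 2) ((A + B) / 2) :=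
    (hf.add hf_alt).div_const 2
  have odd_vanish : ∀ n ∉ Set.range (2 * · : ℕ → ℕ), (f n + (-1) ^ n * f n) / 2 = 0 := by
    intro n hn
    have hodd : Odd n := by
      rw [← Nat.not_even_iff_odd, even_iff_exists_two_mul]
      rintro ⟨k, rfl⟩
      exact hn ⟨k, rfl⟩
    simp [hodd.neg_one_pow]
  rw [← (mul_right_injective₀ two_ne_zero).hasSum_iff odd_vanish] at hmean
  exact hmean.congr_fun fun m ↦ by simp

theorem multichoose_eq_ascPochhammer_div_factorial {K : Type*} [Field K] [CharZero K]
    [BinomialRing K] (w : K) (k : ℕ) :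
    Ring.multichoose w k = (ascPochhammer K k).eval w / k.factorial := by
  rw [eq_div_iff (Nat.cast_ne_zero.2 k.factorial_ne_zero), mul_comm, ← nsmul_eq_mul,
    Ring.factorial_nsmul_multichoose_eq_ascPochhammer, Polynomial.ascPochhammer_smeval_eq_eval]

theorem differentiable_multichoose (k : ℕ) :
    Differentiable ℂ fun w : ℂ ↦ Ring.multichoose w k := by
  simp only [multichoose_eq_ascPochhammer_div_factorial]
  fun_prop

theorem norm_multichoose_le {w : ℂ} {R : ℝ} (hw : ‖w‖ ≤ R) (k : ℕ) :
    ‖Ring.multichoose w k‖ ≤ ‖Ring.multichoose (R : ℂ) k‖ := by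
  simp only [multichoose_eq_ascPochhammer_div_factorial, norm_div]
  gcongr
  induction k with
  | zero => simp
  | succ k ih =>
    have hfactor : ‖w + k‖ ≤ ‖(R : ℂ) + k‖ := calc
      ‖w + k‖ ≤ R + k := (norm_add_le _ _).trans (by simpa using hw)
      _ ≤ ‖(R : ℂ) + k‖ := by exact_mod_cast le_abs_self (R + k)
    simp only [ascPochhammer_succ_eval, norm_mul]
    gcongr

theorem Gamma_add_natCast_eq_multichoose {w : ℂ} (hw : ∀ n : ℕ, w ≠ -n) (k : ℕ) :
    Gamma (w + k) = Gamma w * k.factorial * Ring.multichoose w k := by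
  have hfactorial : (k.factorial : ℂ) ≠ 0 := Nat.cast_ne_zero.2 k.factorial_ne_zero
  have hratio := Gamma_add_nat_div_Gamma_eq (n := k) w hw
  rw [div_eq_iff (Gamma_ne_zero hw)] at hratio
  rw [hratio, multichoose_eq_ascPochhammer_div_factorial]
  field_simp

theorem hasSum_multichoose_mul_pow (w : ℂ) {x : ℂ} (hx : ‖x‖ < 1) :
    HasSum (fun k ↦ Ring.multichoose w k * x ^ k) (1 / (1 - x) ^ w) := by
  have hseries := (one_div_one_sub_cpow_hasFPowerSeriesOnBall_zero w).hasSum (y := x)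
    (by simpa [enorm_eq_nnnorm, ← NNReal.coe_lt_coe] using hx)
  simpa [FormalMultilinearSeries.ofScalars, ← Ring.multichoose_eq] using hseries

theorem hasSum_multichoose_even_mul_pow (w : ℂ) {x : ℂ} (hx : ‖x‖ < 1) :
    HasSum (fun m ↦ Ring.multichoose w (2 * m) * x ^ (2 * m))
      ((1 / (1 - x) ^ w + 1 / (1 + x) ^ w) / 2) := by
  refine hasSum_even_of_hasSum_alternating (hasSum_multichoose_mul_pow w hx) ?_
  have hneg := hasSum_multichoose_mul_pow w (x := -x) (by rwa [norm_neg])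
  rw [sub_neg_eq_add] at hneg
  exact hneg.congr_fun fun k ↦ by rw [neg_pow]; ring

theorem summable_norm_multichoose_even_mul_pow (w : ℂ) {x : ℂ} (hx : ‖x‖ < 1) :
    Summable fun m ↦ ‖Ring.multichoose w (2 * m) * x ^ (2 * m)‖ :=
  (hasSum_multichoose_even_mul_pow w hx).summable.norm

theorem hasSum_one_div_nat_add_one_cpow {s : ℂ} (hs : 1 < s.re) :
    HasSum (fun n : ℕ ↦ 1 / ((n : ℂ) + 1) ^ s) (riemannZeta s) := by
  rw [zeta_eq_tsum_one_div_nat_add_one_cpow hs]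
  simpa using ((summable_nat_add_iff 1).2 (summable_one_div_nat_cpow.2 hs)).hasSum

theorem norm_one_div_nat_add_one_cpow (n : ℕ) (s : ℂ) :
    ‖1 / ((n : ℂ) + 1) ^ s‖ = 1 / ((n : ℝ) + 1) ^ s.re := by
  have h := norm_natCast_cpow_of_pos n.succ_pos s
  push_cast at h
  rw [norm_div, norm_one, h]

theorem summable_one_div_nat_add_one_rpow {σ : ℝ} (hσ : 1 < σ) :
    Summable fun n : ℕ ↦ 1 / ((n : ℝ) + 1) ^ σ := by
  simpa using (summable_nat_add_iff 1).2 (Real.summable_one_div_nat_rpow.2 hσ)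

theorem norm_riemannZeta_le {σ : ℝ} (hσ : 1 < σ) {s : ℂ} (hs : σ ≤ s.re) :
    ‖riemannZeta s‖ ≤ ∑' n : ℕ, 1 / ((n : ℝ) + 1) ^ σ := by
  rw [← (hasSum_one_div_nat_add_one_cpow (hσ.trans_le hs)).tsum_eq]
  refine tsum_of_norm_bounded (summable_one_div_nat_add_one_rpow hσ).hasSum fun n ↦ ?_
  rw [norm_one_div_nat_add_one_cpow]
  gcongr
  simp

theorem hasSum_comm_of_summable {ι κ E : Type*} [AddCommMonoid E] [TopologicalSpace E]
    [ContinuousAdd E] [T3Space E] {f : ι → κ → E} {r : ι → E} {c : κ → E} {S : E}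
    (hf : Summable (Function.uncurry f)) (hr : ∀ n, HasSum (f n) (r n))
    (hc : ∀ m, HasSum (fun n ↦ f n m) (c m)) (hS : HasSum r S) : HasSum c S := by
  have htotal : HasSum (Function.uncurry f) S := by
    convert hf.hasSum
    exact hS.unique (hf.hasSum.prod_fiberwise hr)
  exact ((Equiv.prodComm κ ι).hasSum_iff.2 htotal).prod_fiberwise hc

theorem hasSum_nat_hurwitzZetaEven_sub {a : ℝ} (ha : a ∈ Set.Ioo 0 1) {w : ℂ} (hw : 1 < w.re) :
    HasSum (fun n : ℕ ↦ (1 / ((n : ℂ) + 1 - a) ^ w + 1 / ((n : ℂ) + 1 + a) ^ w) / 2)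
      (hurwitzZetaEven a w - 1 / (a : ℂ) ^ w / 2) := by
  have hpaired := (hasSum_nat_add_iff' 1).2 (hasSum_int_hurwitzZetaEven a hw).nat_add_neg
  have hvalue : hurwitzZetaEven a w - 1 / (a : ℂ) ^ w / 2 =
      hurwitzZetaEven a w + 1 / (a : ℂ) ^ w / 2 -
        (1 / (a : ℂ) ^ w / 2 + 1 / (a : ℂ) ^ w / 2) := by ring
  simp only [Finset.sum_range_one, Nat.cast_zero, Int.cast_zero, neg_zero, zero_add,
    abs_of_pos ha.1] at hpaired
  rw [hvalue]
  refine hpaired.congr_fun fun n ↦ ?_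
  have hpos : |(n : ℝ) + 1 + a| = n + 1 + a :=
    abs_of_pos (by linarith [ha.1, n.cast_nonneg (α := ℝ)])
  have hneg : |-((n : ℝ) + 1) + a| = n + 1 - a := by
    rw [abs_of_neg (by linarith [ha.2, n.cast_nonneg (α := ℝ)]), neg_add', neg_neg]
  simp only [Int.cast_neg, Int.cast_natCast, Nat.cast_add_one, Int.cast_add, Int.cast_one]
  rw [hpos, hneg]
  push_cast
  ring

theorem ofReal_mul_one_add_cpow {N t : ℝ} (hN : 0 ≤ N) (ht : |t| < 1) (w : ℂ) :
    ((N : ℂ) * (1 + t)) ^ w = (N : ℂ) ^ w * (1 + t) ^ w := by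
  exact_mod_cast mul_cpow_ofReal_nonneg hN (b := 1 + t) (by linarith [neg_abs_le t]) w

theorem hasSum_multichoose_mul_one_div_cpow {a N : ℝ} (ha : |a| < N) (w : ℂ) :
    HasSum (fun m : ℕ ↦ Ring.multichoose w (2 * m) * (a : ℂ) ^ (2 * m) *
        (1 / (N : ℂ) ^ (w + (2 * m : ℕ))))
      ((1 / ((N : ℂ) - a) ^ w + 1 / ((N : ℂ) + a) ^ w) / 2) := by
  have hN : 0 < N := (abs_nonneg a).trans_lt ha
  have hN_ne : (N : ℂ) ≠ 0 := ofReal_ne_zero.2 hN.ne'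
  have hratio : |a / N| < 1 := by rwa [abs_div, abs_of_pos hN, div_lt_one hN]
  have hscale_add : ((N : ℂ) + a) ^ w = N ^ w * (1 + (a / N : ℝ)) ^ w := by
    rw [← ofReal_mul_one_add_cpow hN.le hratio, mul_one_add, ofReal_div, mul_div_cancel₀ _ hN_ne]
  have hscale_sub : ((N : ℂ) - a) ^ w = N ^ w * (1 - (a / N : ℝ)) ^ w := by
    rw [sub_eq_add_neg 1, ← ofReal_neg, ← ofReal_mul_one_add_cpow hN.le (by rwa [abs_neg]),
      mul_one_add, ofReal_neg, ofReal_div, mul_neg, mul_div_cancel₀ _ hN_ne, sub_eq_add_neg]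
  have hvalue : (1 / ((N : ℂ) - a) ^ w + 1 / ((N : ℂ) + a) ^ w) / 2 =
      1 / (N : ℂ) ^ w *
        ((1 / (1 - (a / N : ℝ)) ^ w + 1 / (1 + (a / N : ℝ)) ^ w) / 2) := by
    rw [hscale_add, hscale_sub]
    ring
  rw [hvalue]
  refine ((hasSum_multichoose_even_mul_pow w (by rwa [norm_real])).mul_left _).congr_fun fun m ↦ ?_
  rw [cpow_add _ _ hN_ne, cpow_natCast, ofReal_div, div_pow]
  field_simp

theorem hasSum_hurwitzZetaEven_of_one_lt_re {a : ℝ} (ha : a ∈ Set.Ioo 0 1) {w : ℂ}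
    (hw : 1 < w.re) :
    HasSum (fun m : ℕ ↦ Ring.multichoose w (2 * m) * (a : ℂ) ^ (2 * m) *
        riemannZeta (w + (2 * m : ℕ)))
      (hurwitzZetaEven a w - 1 / (a : ℂ) ^ w / 2) := by
  have ha_abs : |a| < 1 := abs_lt.2 ⟨by linarith [ha.1], ha.2⟩
  have hre (m : ℕ) : w.re ≤ (w + (2 * m : ℕ)).re := by simp
  refine hasSum_comm_of_summable ?_
    (fun n ↦ ?_) (fun m ↦ (hasSum_one_div_nat_add_one_cpow (hw.trans_le (hre m))).mul_left _)
    (hasSum_nat_hurwitzZetaEven_sub ha hw)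
  · refine Summable.of_norm_bounded ((summable_one_div_nat_add_one_rpow hw).mul_of_nonneg
      (summable_norm_multichoose_even_mul_pow w (x := a) (by rwa [norm_real]))
      (fun n ↦ by positivity) fun m ↦ by positivity) ?_
    rintro ⟨n, m⟩
    have hpow : ((n : ℝ) + 1) ^ w.re ≤ ((n : ℝ) + 1) ^ (w + (2 * m : ℕ)).re :=
      Real.rpow_le_rpow_of_exponent_le (by simp) (hre m)
    rw [Function.uncurry_apply_pair, norm_mul, norm_one_div_nat_add_one_cpow, mul_comm]
    exact mul_le_mul_of_nonneg_right (one_div_le_one_div_of_le (by positivity) hpow)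
      (norm_nonneg _)
  · have hrow := hasSum_multichoose_mul_one_div_cpow (N := n + 1)
      (ha_abs.trans_le (by simp)) w
    rwa [ofReal_add, ofReal_natCast, ofReal_one] at hrow

/-- The points `1 - 2m`, `m : ℕ`, at which one of the terms `ζ(w + 2m)` has its pole. -/
def shiftedZetaPoles : Set ℂ := Set.range fun m : ℕ ↦ 1 - ((2 * m : ℕ) : ℂ)

theorem isClosed_shiftedZetaPoles : IsClosed shiftedZetaPoles := by
  have hnat : IsClosed (Set.range ((↑) : ℕ → ℂ)) :=
    (isometry_ofReal.isClosedEmbedding.comp Nat.isClosedEmbedding_coe_real).isClosed_range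
  have hpreimage : shiftedZetaPoles = (fun w : ℂ ↦ (1 - w) / 2) ⁻¹' Set.range ((↑) : ℕ → ℂ) := by
    ext w
    simp only [shiftedZetaPoles, Set.mem_range, Set.mem_preimage]
    refine exists_congr fun m ↦ ?_
    push_cast
    grind
  rw [hpreimage]
  exact hnat.preimage (by fun_prop)

theorem isPreconnected_compl_shiftedZetaPoles : IsPreconnected shiftedZetaPolesᶜ :=
  ((Set.countable_range _).isPathConnected_compl_of_one_lt_rank
    (by simp)).isConnected.isPreconnected

theorem add_two_mul_ne_one {w : ℂ} (hw : w ∉ shiftedZetaPoles) (m : ℕ) :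
    w + (2 * m : ℕ) ≠ 1 :=
  fun h ↦ hw ⟨m, sub_eq_of_eq_add h.symm⟩

theorem notMem_shiftedZetaPoles_of_one_lt_re {w : ℂ} (hw : 1 < w.re) : w ∉ shiftedZetaPoles := by
  rintro ⟨m, rfl⟩
  rw [sub_re, one_re, natCast_re] at hw
  linarith [(2 * m).cast_nonneg (α := ℝ)]

theorem norm_multichoose_mul_riemannZeta_le {a R : ℝ} {w : ℂ} (hw : ‖w‖ ≤ R) {m : ℕ}
    (hm : R + 2 ≤ 2 * m) :
    ‖Ring.multichoose w (2 * m) * (a : ℂ) ^ (2 * m) * riemannZeta (w + (2 * m : ℕ))‖ ≤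
      ‖Ring.multichoose (R : ℂ) (2 * m) * (a : ℂ) ^ (2 * m)‖ *
        ∑' n : ℕ, 1 / ((n : ℝ) + 1) ^ (2 : ℝ) := by
  have hre : 2 ≤ (w + (2 * m : ℕ)).re := by
    have := neg_abs_le w.re
    have := abs_re_le_norm w
    rw [add_re, natCast_re]
    push_cast
    linarith
  simp only [norm_mul]
  gcongr
  · exact norm_multichoose_le hw _
  · exact norm_riemannZeta_le one_lt_two hre

theorem summableLocallyUniformlyOn_multichoose_mul_riemannZeta {a : ℝ} (ha : |a| < 1) :
    SummableLocallyUniformlyOn (fun (m : ℕ) (w : ℂ) ↦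
      Ring.multichoose w (2 * m) * (a : ℂ) ^ (2 * m) * riemannZeta (w + (2 * m : ℕ)))
      Set.univ := by
  refine .of_locally_bounded_eventually isOpen_univ fun K _ hK ↦ ?_
  obtain ⟨R, hR⟩ := hK.isBounded.exists_norm_le
  have hmajorant := summable_norm_multichoose_even_mul_pow R (x := a) (by rwa [norm_real])
  refine ⟨_, hmajorant.mul_right (∑' n : ℕ, 1 / ((n : ℝ) + 1) ^ (2 : ℝ)), ?_⟩
  rw [Nat.cofinite_eq_atTop]
  filter_upwards [tendsto_natCast_atTop_atTop.eventually_ge_atTop (R + 2)] with m hm w hw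
  exact norm_multichoose_mul_riemannZeta_le (hR w hw) (by linarith [m.cast_nonneg (α := ℝ)])

theorem differentiableAt_multichoose_mul_riemannZeta {a : ℝ} {w : ℂ} {m : ℕ}
    (hw : w + (2 * m : ℕ) ≠ 1) :
    DifferentiableAt ℂ (fun w : ℂ ↦
      Ring.multichoose w (2 * m) * (a : ℂ) ^ (2 * m) * riemannZeta (w + (2 * m : ℕ))) w :=
  ((differentiable_multichoose _ w).mul_const _).mul
    ((differentiableAt_riemannZeta hw).comp w (by fun_prop))

theorem eventually_nhds_two_one_lt_re : ∀ᶠ z : ℂ in 𝓝 2, 1 < z.re :=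
  continuous_re.continuousAt.eventually (lt_mem_nhds (by simp))

theorem hasSum_hurwitzZetaEven {a : ℝ} (ha : a ∈ Set.Ioo 0 1) {w : ℂ}
    (hw : w ∉ shiftedZetaPoles) :
    HasSum (fun m : ℕ ↦ Ring.multichoose w (2 * m) * (a : ℂ) ^ (2 * m) *
        riemannZeta (w + (2 * m : ℕ)))
      (hurwitzZetaEven a w - 1 / (a : ℂ) ^ w / 2) := by
  have ha_abs : |a| < 1 := abs_lt.2 ⟨by linarith [ha.1], ha.2⟩
  have hopen := isClosed_shiftedZetaPoles.isOpen_compl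
  have hsummable := (summableLocallyUniformlyOn_multichoose_mul_riemannZeta ha_abs).mono
    (Set.subset_univ shiftedZetaPolesᶜ)
  have hseries := (hsummable.differentiableOn hopen fun m z hz ↦
    differentiableAt_multichoose_mul_riemannZeta (add_two_mul_ne_one hz m)).analyticOnNhd hopen
  have hhurwitz : AnalyticOnNhd ℂ (fun z ↦ hurwitzZetaEven a z - 1 / (a : ℂ) ^ z / 2)
      shiftedZetaPolesᶜ := by
    refine DifferentiableOn.analyticOnNhd (fun z hz ↦ ?_) hopen
    have hz_ne : z ≠ 1 := by simpa using add_two_mul_ne_one hz 0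
    have ha_ne : (a : ℂ) ≠ 0 := ofReal_ne_zero.2 ha.1.ne'
    simp only [one_div, ← cpow_neg]
    exact ((differentiableAt_hurwitzZetaEven a hz_ne).sub
      ((differentiableAt_id.neg.const_cpow (.inl ha_ne)).div_const 2)).differentiableWithinAt
  have heq := hseries.eqOn_of_preconnected_of_eventuallyEq hhurwitz
    isPreconnected_compl_shiftedZetaPoles
    (notMem_shiftedZetaPoles_of_one_lt_re (w := 2) (by simp))
    (eventually_nhds_two_one_lt_re.mono fun z hz ↦
      (hasSum_hurwitzZetaEven_of_one_lt_re ha hz).tsum_eq)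
  exact (hsummable.summable hw).hasSum_iff.2 (heq hw)

theorem riemannZeta_one_sub_sub_two_mul {w : ℂ} (hw : ∀ n : ℕ, w ≠ 1 - n) (m : ℕ) :
    riemannZeta (1 - w - (2 * m : ℕ)) =
      2 * (2 * π) ^ (-w) * Gamma w * cos (π * w / 2) *
        ((-1) ^ m * (2 * m).factorial / (2 * π) ^ (2 * m) *
          (Ring.multichoose w (2 * m) * riemannZeta (w + (2 * m : ℕ)))) := by
  have hw_neg (n : ℕ) : w ≠ -n := fun h ↦ hw (n + 1) (by rw [h]; push_cast; ring)
  have hshift_neg (n : ℕ) : w + (2 * m : ℕ) ≠ -n := fun h ↦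
    hw_neg (n + 2 * m) (by rw [eq_sub_of_add_eq h]; push_cast; ring)
  have hshift_one : w + (2 * m : ℕ) ≠ 1 := fun h ↦ hw (2 * m) (eq_sub_of_add_eq h)
  have htwo_pi : (2 * π : ℂ) ≠ 0 := by simp [Real.pi_ne_zero]
  have hcos : cos (π * (w + (2 * m : ℕ)) / 2) = (-1) ^ m * cos (π * w / 2) := by
    rw [← cos_antiperiodic.add_nat_mul_eq m]
    congr 1
    push_cast
    ring
  rw [sub_sub, riemannZeta_one_sub hshift_neg hshift_one, hcos,
    Gamma_add_natCast_eq_multichoose hw_neg, neg_add, cpow_add _ _ htwo_pi, cpow_neg _ (2 * m : ℕ),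
    cpow_natCast]
  ring

theorem hasSum_cosZeta_one_sub {a : ℝ} (ha : a ∈ Set.Ioo 0 1) {w : ℂ} (hw : ∀ n : ℕ, w ≠ 1 - n) :
    HasSum (fun m : ℕ ↦ (-1) ^ m * (2 * π * a) ^ (2 * m) / (2 * m).factorial *
        riemannZeta (1 - w - (2 * m : ℕ)))
      (cosZeta a (1 - w) - Gamma w * cos (π * w / 2) * (2 * π * a) ^ (-w)) := by
  have hw_poles : w ∉ shiftedZetaPoles := by
    rintro ⟨m, rfl⟩
    exact hw (2 * m) rfl
  have hpow : (2 * π * a : ℂ) ^ (-w) = (2 * π) ^ (-w) * (a : ℂ) ^ (-w) := by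
    exact_mod_cast mul_cpow_ofReal_nonneg Real.two_pi_pos.le ha.1.le (-w)
  have hvalue : cosZeta a (1 - w) - Gamma w * cos (π * w / 2) * (2 * π * a) ^ (-w) =
      2 * (2 * π) ^ (-w) * Gamma w * cos (π * w / 2) *
        (hurwitzZetaEven a w - 1 / (a : ℂ) ^ w / 2) := by
    rw [cosZeta_one_sub a hw, hpow, cpow_neg a, one_div]
    ring
  rw [hvalue]
  refine ((hasSum_hurwitzZetaEven ha hw_poles).mul_left _).congr_fun fun m ↦ ?_
  have hfactorial : ((2 * m).factorial : ℂ) ≠ 0 := Nat.cast_ne_zero.2 (Nat.factorial_ne_zero _)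
  have htwo_pi : (2 * π : ℂ) ^ (2 * m) ≠ 0 := by simp [Real.pi_ne_zero]
  have hsign : ((-1 : ℂ) ^ m) ^ 2 = 1 := by rw [← pow_mul, mul_comm, pow_mul, neg_one_sq, one_pow]
  rw [riemannZeta_one_sub_sub_two_mul hw, mul_pow _ (a : ℂ)]
  field_simp
  rw [hsign, one_mul]

theorem hasSum_cosZeta {a : ℝ} (ha : a ∈ Set.Ioo 0 1) {s : ℂ} (hs : ∀ n : ℕ, s ≠ n + 1) :
    HasSum (fun m : ℕ ↦ (-1) ^ m * (2 * π * a) ^ (2 * m) / (2 * m).factorial *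
        riemannZeta (s - (2 * m : ℕ)))
      (cosZeta a s - Gamma (1 - s) * sin (π * s / 2) * (2 * π * a) ^ (s - 1)) := by
  rcases eq_or_ne s 0 with rfl | hs_zero
  · have hvalue : cosZeta a 0 - Gamma (1 - 0) * sin (π * 0 / 2) * (2 * π * a) ^ ((0 : ℂ) - 1) =
        (-1) ^ 0 * (2 * π * a) ^ (2 * 0) / (2 * 0).factorial * riemannZeta (0 - (2 * 0 : ℕ)) := by
      simp [cosZeta_apply_zero, riemannZeta_zero]
    rw [hvalue]
    refine hasSum_single 0 fun m hm ↦ ?_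
    obtain ⟨k, rfl⟩ := Nat.exists_eq_succ_of_ne_zero hm
    have htrivial_zero : riemannZeta (0 - (2 * (k + 1) : ℕ)) = 0 := by
      convert riemannZeta_neg_two_mul_nat_add_one k using 2
      push_cast
      ring
    rw [htrivial_zero, mul_zero]
  · have hs_one_sub (n : ℕ) : 1 - s ≠ 1 - n := by
      rw [Ne, sub_right_inj]
      rcases n with _ | n
      · simpa using hs_zero
      · simpa using hs n
    have hcos : cos (π * (1 - s) / 2) = sin (π * s / 2) := by
      rw [← cos_pi_div_two_sub]
      congr 1
      ring
    simpa only [hcos, sub_sub_cancel, neg_sub] using hasSum_cosZeta_one_sub ha hs_one_sub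

theorem cosZeta_half_of_one_lt_re {s : ℂ} (hs : 1 < s.re) :
    cosZeta (1 / 2 : ℝ) s = (2 ^ (1 - s) - 1) * riemannZeta s := by
  have hzeta : HasSum (fun n : ℕ ↦ 1 / (n : ℂ) ^ s) (riemannZeta s) := by
    simpa [cosZeta_zero] using hasSum_nat_cosZeta 0 hs
  have halternating : HasSum (fun n : ℕ ↦ (-1) ^ n * (1 / (n : ℂ) ^ s))
      (cosZeta (1 / 2 : ℝ) s) := by
    refine (hasSum_nat_cosZeta (1 / 2) hs).congr_fun fun n ↦ ?_
    have hcos : Real.cos (2 * π * (1 / 2) * n) = (-1) ^ n := by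
      rw [← Real.cos_nat_mul_pi]
      congr 1
      ring
    rw [hcos]
    push_cast
    ring
  have heven : HasSum (fun m : ℕ ↦ 1 / ((2 * m : ℕ) : ℂ) ^ s) (2 ^ (-s) * riemannZeta s) := by
    refine (hzeta.mul_left _).congr_fun fun m ↦ ?_
    rw [Nat.cast_mul, natCast_mul_natCast_cpow, cpow_neg]
    push_cast
    ring
  have hmean := (hasSum_even_of_hasSum_alternating hzeta halternating).unique heven
  rw [sub_eq_add_neg 1 s, cpow_add _ _ two_ne_zero, cpow_one]
  linear_combination 2 * hmean

theorem cosZeta_half {s : ℂ} (hs : s ≠ 1) :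
    cosZeta (1 / 2 : ℝ) s = (2 ^ (1 - s) - 1) * riemannZeta s := by
  have hhalf : ((1 / 2 : ℝ) : UnitAddCircle) ≠ 0 := by
    rw [Ne, AddCircle.coe_eq_zero_iff]
    rintro ⟨n, hn⟩
    have : (2 * n : ℝ) = 1 := by rw [← mul_one (n : ℝ), ← zsmul_eq_mul, hn]; norm_num
    norm_cast at this
    lia
  have hcos : AnalyticOnNhd ℂ (cosZeta (1 / 2 : ℝ)) {1}ᶜ :=
    (differentiable_cosZeta_of_ne_zero hhalf).differentiableOn.analyticOnNhd isOpen_compl_singleton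
  have hzeta : AnalyticOnNhd ℂ (fun z ↦ (2 ^ (1 - z) - 1) * riemannZeta z) {1}ᶜ := by
    refine DifferentiableOn.analyticOnNhd (fun z hz ↦ ?_) isOpen_compl_singleton
    refine (DifferentiableAt.mul ?_ (differentiableAt_riemannZeta hz)).differentiableWithinAt
    exact (DifferentiableAt.const_cpow (by fun_prop) (.inl two_ne_zero)).sub_const 1
  exact hcos.eqOn_of_preconnected_of_eventuallyEq hzeta
    (isConnected_compl_singleton_of_one_lt_rank (by simp) 1).isPreconnected
    (show (2 : ℂ) ∈ ({1} : Set ℂ)ᶜ by simp)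
    (eventually_nhds_two_one_lt_re.mono fun z hz ↦ cosZeta_half_of_one_lt_re hz) hs

theorem hasSum_two_mul_riemannZeta_sub_two_mul {s : ℂ} (hs : ∀ n : ℕ, s ≠ n + 1) :
    HasSum (fun m : ℕ ↦ 2 * (-1) ^ ((m + 1) + 1) * riemannZeta (s - 2 * (m + 1)) *
        (π : ℂ) ^ (2 * (m + 1)) / (2 * (m + 1)).factorial)
      ((4 - 2 ^ (2 - s)) * riemannZeta s +
        2 * (π : ℂ) ^ (s - 1) * sin (s * π / 2) * Gamma (1 - s)) := by
  have hpi : (2 * π * (1 / 2 : ℝ) : ℂ) = π := by push_cast; ring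
  have hs_one : s ≠ 1 := by simpa using hs 0
  have hfull := hasSum_cosZeta (a := 1 / 2) (by norm_num) hs
  rw [hpi, cosZeta_half hs_one] at hfull
  have htail := ((hasSum_nat_add_iff' 1).2 hfull).mul_left (-2)
  have htwo_pow : (2 : ℂ) ^ (2 - s) = 2 * 2 ^ (1 - s) := by
    rw [show 2 - s = 1 + (1 - s) by ring, cpow_add _ _ two_ne_zero, cpow_one]
  have hvalue : (4 - 2 ^ (2 - s)) * riemannZeta s +
        2 * (π : ℂ) ^ (s - 1) * sin (s * π / 2) * Gamma (1 - s) =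
      -2 * ((2 ^ (1 - s) - 1) * riemannZeta s -
        Gamma (1 - s) * sin (π * s / 2) * (π : ℂ) ^ (s - 1) - riemannZeta s) := by
    rw [htwo_pow, mul_comm s]
    ring
  simp only [Finset.sum_range_one, mul_zero, pow_zero, Nat.factorial_zero, Nat.cast_zero,
    Nat.cast_one, sub_zero, div_one, one_mul] at htail
  rw [hvalue]
  refine htail.congr_fun fun m ↦ ?_
  rw [pow_succ]
  push_cast
  ring

theorem stmt_14_general (α : ℝ) (hα : ∀ n : ℕ, α ≠ n + 1) :
    HasSum
      (fun m : ℕ =>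
        2 * (-1 : ℝ) ^ ((m + 1) + 1) * rzeta (α - 2 * ((m : ℝ) + 1))
          * Real.pi ^ (2 * (m + 1)) / (Nat.factorial (2 * (m + 1)) : ℝ))
      ((4 - (2 : ℝ) ^ (2 - α)) * rzeta α
        + 2 * Real.pi ^ (α - 1) * Real.sin (α * Real.pi / 2) * Real.Gamma (1 - α)) := by
  have hcomplex := hasSum_re (hasSum_two_mul_riemannZeta_sub_two_mul (s := α)
    fun n ↦ by exact_mod_cast hα n)
  have hvalue : (4 - (2 : ℂ) ^ (2 - α : ℂ)) * riemannZeta α +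
        2 * (π : ℂ) ^ (α - 1 : ℂ) * sin (α * π / 2) * Gamma (1 - α) =
      ((4 - (2 : ℝ) ^ (2 - α) : ℝ) : ℂ) * riemannZeta α +
        ((2 * π ^ (α - 1) * Real.sin (α * π / 2) * Real.Gamma (1 - α) : ℝ) : ℂ) := by
    push_cast [ofReal_cpow Real.pi_pos.le, ofReal_cpow zero_le_two, ← Gamma_ofReal]
    rfl
  rw [hvalue, add_re, re_ofReal_mul, ofReal_re] at hcomplex
  refine hcomplex.congr_fun fun m ↦ ?_
  have hterm : 2 * (-1) ^ ((m + 1) + 1) * riemannZeta (α - 2 * (m + 1)) *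
        (π : ℂ) ^ (2 * (m + 1)) / (2 * (m + 1)).factorial =
      ((2 * (-1) ^ ((m + 1) + 1) * π ^ (2 * (m + 1)) / (2 * (m + 1)).factorial : ℝ) : ℂ) *
        riemannZeta (α - 2 * (m + 1) : ℝ) := by
    push_cast
    ring
  rw [hterm, re_ofReal_mul, rzeta]
  ring

/-- for `1 < α < 2`, the series
`∑_{m=1}^∞ 2 (-1)^{m+1} ζ(α-2m) π^{2m} / (2m)!` converges to
`(4 - 2^{2-α}) ζ(α) + 2 π^{α-1} sin(απ/2) Γ(1-α)`.
(The sum over `m ≥ 1` is indexed here by `m : ℕ` via `m + 1`.) -/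
theorem stmt_14 (α : ℝ) (h1 : 1 < α) (h2 : α < 2) :
    HasSum
      (fun m : ℕ =>
        2 * (-1 : ℝ) ^ ((m + 1) + 1) * rzeta (α - 2 * ((m : ℝ) + 1))
          * Real.pi ^ (2 * (m + 1)) / (Nat.factorial (2 * (m + 1)) : ℝ))
      ((4 - (2 : ℝ) ^ (2 - α)) * rzeta α
        + 2 * Real.pi ^ (α - 1) * Real.sin (α * Real.pi / 2) * Real.Gamma (1 - α)) :=
  stmt_14_general α fun n hn ↦ by
    rw [hn] at h1 h2
    norm_cast at h1 h2
    lia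
end

section
/- Fix a real α with 1 < α < 2. For even integers n ≥ 4, define λ_k(α,n) = 2 ∑_{j=1}^{n−1} j^{−α} cos(2πkj/n), the rescaled eigenvalues λ̃_k(α,n) = (λ_k(α,n) − λ_{n/2}(α,n)) / (λ_0(α,n) − λ_{n/2}(α,n)), and S_1(α,n) = (1/n) ∑_{k=1}^{n−1} (1 − λ̃_k(α,n))^{−1}. Then the sequence S_1(α,n) converges to a finite positive limit as even n → ∞. -/
/-- Rescaled eigenvalues `λ̃_k = (λ_k - λ_{n/2})/(λ_0 - λ_{n/2})` for even `n`. -/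
noncomputable def lamT (α : ℝ) (n k : ℕ) : ℝ :=
  (lam α n k - lam α n (n / 2)) / (lam α n 0 - lam α n (n / 2))

/-- `S_q(α,n) = (1/n) ∑_{k=1}^{n-1} (1 - λ̃_k)^{-q}`. -/
noncomputable def Sq (q : ℕ) (α : ℝ) (n : ℕ) : ℝ :=
  (1 / (n : ℝ)) * ∑ k ∈ Finset.Icc 1 (n - 1), (1 - lamT α n k) ^ (-(q : ℤ))

/-!
Up to normalization `1 - λ̃_k` is `D_n(k/n)`, where `D_n(y) = ∑_{j<n} 4 j^{-α} sin²(π y j)`, so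
`S_q(α,n)` is `D_n(⌊n/2⌋/n)^q` times a Riemann sum of `D_n^{-q}` over `[0,1]`. For `α > 1` the
`D_n` converge uniformly to a continuous `D`. The terms with `j ≤ 1/(2y)` already give
`D_n(y) ≥ (2y)^{α-1} / 2` for `1/n ≤ y ≤ 1/2`, and `D_n(1-y) = D_n(y)`, so the Riemann sums are
dominated by a multiple of `min(x, 1-x)^{-q(α-1)}`. This is integrable when `q(α-1) < 1`, and
dominated convergence yields the limit `D(1/2)^q ∫₀¹ D^{-q}`.
-/

section

open Filter MeasureTheory Real Set
open scoped Topology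

/-! ### Dominated convergence for Riemann sums -/

section RiemannSum

variable {E : Type*} [NormedAddCommGroup E]

theorem eqOn_comp_natFloor_Ioo {β : Type*} (a : ℕ → β) (k : ℕ) :
    EqOn (fun x : ℝ => a ⌊x⌋₊) (fun _ => a k) (Ioo (k : ℝ) (k + 1 : ℕ)) := fun x hx =>
  congrArg a ((Nat.floor_eq_iff (k.cast_nonneg.trans hx.1.le)).2
    ⟨hx.1.le, by simpa only [Nat.cast_add_one] using hx.2⟩)

theorem intervalIntegrable_comp_natFloor (a : ℕ → E) (k : ℕ) :
    IntervalIntegrable (fun x : ℝ => a ⌊x⌋₊) volume k (k + 1 : ℕ) :=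
  (intervalIntegrable_iff_integrableOn_Ioo_of_le (by simp)).2 <|
    (integrableOn_const (by simp)).congr_fun (eqOn_comp_natFloor_Ioo a k).symm measurableSet_Ioo

variable [NormedSpace ℝ E]

theorem integral_comp_natFloor [CompleteSpace E] (a : ℕ → E) (N : ℕ) :
    ∫ x in (0 : ℝ)..N, a ⌊x⌋₊ = ∑ k ∈ Finset.range N, a k := by
  have integral_cell (k : ℕ) : ∫ x in (k : ℝ)..(k + 1 : ℕ), a ⌊x⌋₊ = a k := by
    rw [intervalIntegral.integral_of_le (by simp), integral_Ioc_eq_integral_Ioo,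
      setIntegral_congr_fun measurableSet_Ioo (eqOn_comp_natFloor_Ioo a k)]
    simp
  simpa only [integral_cell, Nat.cast_zero] using
    (intervalIntegral.sum_integral_adjacent_intervals (a := fun k : ℕ => (k : ℝ)) (n := N)
      fun k _ => intervalIntegrable_comp_natFloor a k).symm

theorem integral_comp_natFloor_mul [CompleteSpace E] (a : ℕ → E) {N : ℕ} (hN : N ≠ 0) :
    ∫ x in (0 : ℝ)..1, a ⌊N * x⌋₊ = (N : ℝ)⁻¹ • ∑ k ∈ Finset.range N, a k := by
  rw [intervalIntegral.integral_comp_mul_left (fun x => a ⌊x⌋₊) (Nat.cast_ne_zero.2 hN),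
    mul_zero, mul_one, integral_comp_natFloor]

theorem tendsto_average_of_dominated_convergence [CompleteSpace E] {a : ℕ → ℕ → E} {f : ℝ → E}
    {bound : ℝ → ℝ} (bound_integrable : IntegrableOn bound (Ioo 0 1))
    (h_bound : ∀ N : ℕ, ∀ x ∈ Ioo (0 : ℝ) 1, ‖a N ⌊N * x⌋₊‖ ≤ bound x)
    (h_lim : ∀ x ∈ Ioo (0 : ℝ) 1, Tendsto (fun N : ℕ => a N ⌊N * x⌋₊) atTop (𝓝 (f x))) :
    Tendsto (fun N : ℕ => (N : ℝ)⁻¹ • ∑ k ∈ Finset.range N, a N k) atTop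
      (𝓝 (∫ x in (0 : ℝ)..1, f x)) := by
  have tendsto_integral : Tendsto (fun N : ℕ => ∫ x in (0 : ℝ)..1, a N ⌊N * x⌋₊) atTop
      (𝓝 (∫ x in (0 : ℝ)..1, f x)) := by
    simp only [intervalIntegral.integral_of_le zero_le_one, integral_Ioc_eq_integral_Ioo]
    refine tendsto_integral_of_dominated_convergence bound (fun N => ?_) bound_integrable
      (fun N => ae_restrict_of_forall_mem measurableSet_Ioo (h_bound N))
      (ae_restrict_of_forall_mem measurableSet_Ioo h_lim)
    exact (StronglyMeasurable.of_discrete.comp_measurable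
      (Nat.measurable_floor.comp (measurable_const_mul _))).aestronglyMeasurable
  refine tendsto_integral.congr' ?_
  filter_upwards [eventually_ne_atTop 0] with N hN
  exact integral_comp_natFloor_mul (a N) hN

end RiemannSum

theorem integrableOn_min_one_sub_rpow {r : ℝ} (hr : -1 < r) :
    IntegrableOn (fun x : ℝ => min x (1 - x) ^ r) (Ioo 0 1) := by
  have left : IntervalIntegrable (fun x : ℝ => x ^ r) volume 0 1 :=
    intervalIntegral.intervalIntegrable_rpow' hr
  have right : IntervalIntegrable (fun x : ℝ => (1 - x) ^ r) volume 0 1 := by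
    simpa using (left.comp_sub_left 1).symm
  have integrable_sum :=
    (intervalIntegrable_iff_integrableOn_Ioo_of_le zero_le_one).1 (left.add right)
  refine integrable_sum.mono' (by fun_prop : Measurable _).aestronglyMeasurable
    (ae_restrict_of_forall_mem measurableSet_Ioo ?_)
  rintro x ⟨hx0, hx1⟩
  have left_nonneg : 0 ≤ x ^ r := rpow_nonneg hx0.le r
  have right_nonneg : 0 ≤ (1 - x) ^ r := rpow_nonneg (sub_nonneg.2 hx1.le) r
  rcases min_choice x (1 - x) with h | h <;>
    simp only [h, norm_of_nonneg, left_nonneg, right_nonneg] <;> linarith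

/-! ### The dispersion function -/

/-- The `j`-th Fourier contribution `2 j^{-α} (1 - cos (2π y j))` to `λ_0 - λ_k` at frequency
`y = k / n`, written with a squared sine so that its sign is visible. It vanishes at `j = 0`. -/
noncomputable def dispersionTerm (α y : ℝ) (j : ℕ) : ℝ :=
  4 * (j : ℝ) ^ (-α) * sin (π * y * j) ^ 2

/-- The dispersion function `D_N(y)` of the chain with `N` sites, interpolating
`λ_0 - λ_k = D_N(k / N)` to real frequencies `y`. -/
noncomputable def dispersionSum (α : ℝ) (N : ℕ) (y : ℝ) : ℝ :=
  ∑ j ∈ Finset.range N, dispersionTerm α y j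

/-- The dispersion function `D(y) = lim D_N(y)` of the infinite chain. It is meant for
`α > 1`: where the series diverges, the value is `0` by convention. -/
noncomputable def dispersion (α y : ℝ) : ℝ :=
  ∑' j, dispersionTerm α y j

variable {α x y : ℝ} {N : ℕ}

theorem dispersionTerm_zero_right (α y : ℝ) : dispersionTerm α y 0 = 0 := by
  simp [dispersionTerm]

theorem dispersionTerm_nonneg (α y : ℝ) (j : ℕ) : 0 ≤ dispersionTerm α y j := by
  unfold dispersionTerm; positivity

theorem dispersionTerm_one_sub (α y : ℝ) (j : ℕ) :
    dispersionTerm α (1 - y) j = dispersionTerm α y j := by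
  have h : π * (1 - y) * j = j * π - π * y * j := by ring
  rw [dispersionTerm, h, sin_nat_mul_pi_sub, neg_sq, mul_pow, pow_right_comm, neg_one_sq, one_pow,
    one_mul, dispersionTerm]

theorem continuous_dispersionTerm (α : ℝ) (j : ℕ) : Continuous (dispersionTerm α · j) := by
  unfold dispersionTerm; fun_prop

theorem dispersionSum_zero_right (α : ℝ) (N : ℕ) : dispersionSum α N 0 = 0 := by
  simp [dispersionSum, dispersionTerm]

theorem dispersionSum_nonneg (α : ℝ) (N : ℕ) (y : ℝ) : 0 ≤ dispersionSum α N y :=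
  Finset.sum_nonneg fun j _ => dispersionTerm_nonneg α y j

theorem dispersionSum_one_sub (α : ℝ) (N : ℕ) (y : ℝ) :
    dispersionSum α N (1 - y) = dispersionSum α N y :=
  Finset.sum_congr rfl fun j _ => dispersionTerm_one_sub α y j

theorem summable_four_mul_rpow_neg (hα : 1 < α) : Summable fun j : ℕ => 4 * (j : ℝ) ^ (-α) :=
  (summable_nat_rpow.2 (neg_lt_neg hα)).mul_left 4

theorem norm_dispersionTerm_le (α y : ℝ) (j : ℕ) : ‖dispersionTerm α y j‖ ≤ 4 * (j : ℝ) ^ (-α) :=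
  (norm_of_nonneg (dispersionTerm_nonneg α y j)).trans_le <|
    mul_le_of_le_one_right (by positivity) (sin_sq_le_one _)

theorem tendstoUniformly_dispersionSum (hα : 1 < α) :
    TendstoUniformly (dispersionSum α) (dispersion α) atTop :=
  tendstoUniformly_tsum_nat (summable_four_mul_rpow_neg hα) fun j y => norm_dispersionTerm_le α y j

theorem continuous_dispersion (hα : 1 < α) : Continuous (dispersion α) :=
  continuous_tsum (continuous_dispersionTerm α) (summable_four_mul_rpow_neg hα)
    fun j y => norm_dispersionTerm_le α y j

theorem tendsto_dispersionSum (hα : 1 < α) {u : ℕ → ℝ} (hu : Tendsto u atTop (𝓝 y)) :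
    Tendsto (fun N => dispersionSum α N (u N)) atTop (𝓝 (dispersion α y)) :=
  (tendstoUniformly_dispersionSum hα).tendsto_comp (continuous_dispersion hα).continuousAt hu

/-! ### Lower bounds near the zeros of the dispersion function -/

theorem two_mul_le_sin_pi_mul (hx0 : 0 ≤ x) (hx : x ≤ 1 / 2) : 2 * x ≤ sin (π * x) := by
  have h := mul_le_sin (mul_nonneg pi_pos.le hx0) (by nlinarith [pi_pos] : π * x ≤ π / 2)
  rwa [← mul_assoc, div_mul_cancel₀ _ pi_ne_zero] at h

theorem le_dispersionTerm (hα : 1 ≤ α) (hy : 0 ≤ y) {j M : ℕ} (hjM : j ≤ M)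
    (hyM : y * M ≤ 1 / 2) :
    16 * y ^ 2 * (M : ℝ) ^ (1 - α) * j ≤ dispersionTerm α y j := by
  rcases j.eq_zero_or_pos with rfl | hj
  · simp [dispersionTerm_zero_right]
  have hj0 : (0 : ℝ) < j := Nat.cast_pos.2 hj
  have hjM' : (j : ℝ) ≤ M := Nat.cast_le.2 hjM
  have sin_ge : 2 * (y * j) ≤ sin (π * y * j) := by
    rw [mul_assoc π]
    exact two_mul_le_sin_pi_mul (by positivity) (le_trans (by gcongr) hyM)
  calc 16 * y ^ 2 * (M : ℝ) ^ (1 - α) * j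
      ≤ 16 * y ^ 2 * (j : ℝ) ^ (1 - α) * j := by
        gcongr 16 * y ^ 2 * ?_ * j
        exact rpow_le_rpow_of_nonpos hj0 hjM' (sub_nonpos.2 hα)
    _ = 4 * (j : ℝ) ^ (-α) * (2 * (y * j)) ^ 2 := by
        rw [sub_eq_neg_add, rpow_add_one hj0.ne']; ring
    _ ≤ dispersionTerm α y j := by unfold dispersionTerm; gcongr

theorem le_dispersionSum_of_mul_le_half (hα : 1 ≤ α) (hy : 0 ≤ y) {M : ℕ} (hMN : M < N)
    (hyM : y * M ≤ 1 / 2) :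
    8 * (y * M) ^ 2 * (M : ℝ) ^ (1 - α) ≤ dispersionSum α N y := by
  have gauss : (∑ j ∈ Finset.range (M + 1), (j : ℝ)) * 2 = (M + 1) * M := by
    rw [← Nat.cast_sum]
    exact_mod_cast Finset.sum_range_id_mul_two (M + 1)
  calc 8 * (y * M) ^ 2 * (M : ℝ) ^ (1 - α)
      = 16 * y ^ 2 * (M : ℝ) ^ (1 - α) * ((M : ℝ) * M / 2) := by ring
    _ ≤ 16 * y ^ 2 * (M : ℝ) ^ (1 - α) * ∑ j ∈ Finset.range (M + 1), (j : ℝ) := by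
        gcongr; linarith [M.cast_nonneg (α := ℝ)]
    _ = ∑ j ∈ Finset.range (M + 1), 16 * y ^ 2 * (M : ℝ) ^ (1 - α) * j := Finset.mul_sum ..
    _ ≤ ∑ j ∈ Finset.range (M + 1), dispersionTerm α y j :=
        Finset.sum_le_sum fun j hj => le_dispersionTerm hα hy (Finset.mem_range_succ_iff.1 hj) hyM
    _ ≤ dispersionSum α N y :=
        Finset.sum_le_sum_of_subset_of_nonneg (Finset.range_mono hMN)
          fun j _ _ => dispersionTerm_nonneg α y j

theorem rpow_le_dispersionSum_of_le_half (hα : 1 ≤ α) (hNy : 1 ≤ N * y) (hy : y ≤ 1 / 2) :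
    (2 * y) ^ (α - 1) / 2 ≤ dispersionSum α N y := by
  have hy0 : 0 < y := pos_of_mul_pos_right (one_pos.trans_le hNy) N.cast_nonneg
  set M := ⌊(2 * y)⁻¹⌋₊
  have hM_le : (M : ℝ) ≤ (2 * y)⁻¹ := Nat.floor_le (by positivity)
  have hyM_le : y * M ≤ 1 / 2 := by
    calc y * M ≤ y * (2 * y)⁻¹ := by gcongr
      _ = 1 / 2 := by field_simp
  have hM_one : (1 : ℝ) ≤ M :=
    Nat.one_le_cast.2 ((Nat.one_le_floor_iff _).2 ((one_le_inv₀ (by positivity)).2 (by linarith)))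
  have hyM_ge : 1 / 4 ≤ y * M := by
    have := (inv_lt_iff_one_lt_mul₀' (by positivity)).1 (Nat.lt_floor_add_one (2 * y)⁻¹)
    nlinarith
  have hMN : M < N := by
    have : (M : ℝ) < N := lt_of_mul_lt_mul_left (by linarith) hy0.le
    exact_mod_cast this
  calc (2 * y) ^ (α - 1) / 2
      = 8 * (1 / 4) ^ 2 * (2 * y) ^ (α - 1) := by ring
    _ ≤ 8 * (y * M) ^ 2 * (2 * y) ^ (α - 1) := by gcongr
    _ = 8 * (y * M) ^ 2 * ((2 * y)⁻¹) ^ (1 - α) := by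
        rw [inv_rpow (by positivity), ← rpow_neg (by positivity), neg_sub]
    _ ≤ 8 * (y * M) ^ 2 * (M : ℝ) ^ (1 - α) := by
        gcongr 8 * (y * M) ^ 2 * ?_
        exact rpow_le_rpow_of_nonpos (by positivity) hM_le (sub_nonpos.2 hα)
    _ ≤ dispersionSum α N y := le_dispersionSum_of_mul_le_half hα hy0.le hMN hyM_le

theorem min_rpow_le_dispersionSum (hα : 1 ≤ α) (hNy : 1 ≤ N * y) (hNy' : 1 ≤ N * (1 - y)) :
    (2 * min y (1 - y)) ^ (α - 1) / 2 ≤ dispersionSum α N y := by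
  rcases le_total y (1 / 2) with hy | hy
  · rw [min_eq_left (by linarith)]
    exact rpow_le_dispersionSum_of_le_half hα hNy hy
  · rw [min_eq_right (by linarith), ← dispersionSum_one_sub]
    exact rpow_le_dispersionSum_of_le_half hα hNy' (by linarith)

theorem min_one_sub_pos (hx : x ∈ Ioo (0 : ℝ) 1) : 0 < min x (1 - x) :=
  lt_min hx.1 (sub_pos.2 hx.2)

theorem min_rpow_le_dispersionSum_floor (hα : 1 ≤ α) (hx : x ∈ Ioo (0 : ℝ) 1)
    (hNx : ⌊N * x⌋₊ ≠ 0) :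
    min x (1 - x) ^ (α - 1) / 2 ≤ dispersionSum α N (⌊N * x⌋₊ / N) := by
  set k := ⌊N * x⌋₊
  have hN : (0 : ℝ) < N := by
    refine N.cast_nonneg.lt_of_ne' fun hN => hNx ?_
    simp [k, hN]
  have hk_one : (1 : ℝ) ≤ k := Nat.one_le_cast.2 (Nat.one_le_iff_ne_zero.2 hNx)
  have hk_le : (k : ℝ) ≤ N * x := Nat.floor_le (mul_nonneg hN.le hx.1.le)
  have hk_gt : N * x < k + 1 := Nat.lt_floor_add_one _
  have hk_lt : k < N := Nat.cast_lt.1 (hk_le.trans_lt (mul_lt_of_lt_one_right hN hx.2))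
  have hk_add_one : (k + 1 : ℝ) ≤ N := by exact_mod_cast hk_lt
  have hNk : N * (k / N : ℝ) = k := mul_div_cancel₀ _ hN.ne'
  have le_two_mul : x ≤ 2 * (k / N) := by
    rw [← mul_div_assoc, le_div_iff₀ hN]; linarith
  have div_le : (k / N : ℝ) ≤ x := (div_le_iff₀' hN).2 hk_le
  refine le_trans ?_ (min_rpow_le_dispersionSum hα (hNk.symm ▸ hk_one) (by linarith))
  rw [mul_min_of_nonneg _ _ zero_le_two]
  gcongr
  · exact (min_one_sub_pos hx).le
  · linarith [hx.2]

theorem tendsto_natFloor_mul_natCast_div (hx : 0 ≤ x) :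
    Tendsto (fun N : ℕ => (⌊N * x⌋₊ / N : ℝ)) atTop (𝓝 x) := by
  simpa only [Function.comp_def, mul_comm x] using
    (tendsto_nat_floor_mul_div_atTop hx).comp tendsto_natCast_atTop_atTop

theorem min_rpow_le_dispersion (hα : 1 < α) (hx : x ∈ Ioo (0 : ℝ) 1) :
    min x (1 - x) ^ (α - 1) / 2 ≤ dispersion α x := by
  have eventually_one_le : ∀ᶠ N : ℕ in atTop, 1 ≤ N * x :=
    (tendsto_natCast_atTop_atTop.atTop_mul_const hx.1).eventually_ge_atTop 1
  refine ge_of_tendsto (tendsto_dispersionSum hα (tendsto_natFloor_mul_natCast_div hx.1.le)) ?_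
  filter_upwards [eventually_one_le] with N hN
  exact min_rpow_le_dispersionSum_floor hα.le hx
    (Nat.one_le_iff_ne_zero.1 ((Nat.one_le_floor_iff _).2 hN))

theorem dispersion_pos (hα : 1 < α) (hx : x ∈ Ioo (0 : ℝ) 1) : 0 < dispersion α x :=
  (half_pos (rpow_pos_of_pos (min_one_sub_pos hx) _)).trans_le (min_rpow_le_dispersion hα hx)

/-! ### Moments of the inverse dispersion function -/

variable {q : ℕ}

theorem inv_pow_le_of_rpow_div_two_le {m s d : ℝ} (hm : 0 < m) (h : m ^ s / 2 ≤ d) (q : ℕ) :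
    (d ^ q)⁻¹ ≤ 2 ^ q * m ^ (-(q * s)) :=
  calc (d ^ q)⁻¹ ≤ ((m ^ s / 2) ^ q)⁻¹ := by gcongr
    _ = 2 ^ q * m ^ (-(q * s)) := by
        rw [div_pow, inv_div, ← rpow_mul_natCast hm.le, rpow_neg hm.le, mul_comm s, div_eq_mul_inv]

theorem inv_dispersionSum_floor_pow_le (hα : 1 ≤ α) (hq : q ≠ 0) (N : ℕ)
    (hx : x ∈ Ioo (0 : ℝ) 1) :
    (dispersionSum α N (⌊N * x⌋₊ / N) ^ q)⁻¹ ≤ 2 ^ q * min x (1 - x) ^ (-(q * (α - 1))) := by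
  have hmin := min_one_sub_pos hx
  by_cases hNx : ⌊N * x⌋₊ = 0
  · rw [hNx, Nat.cast_zero, zero_div, dispersionSum_zero_right, zero_pow hq, inv_zero]
    positivity
  · exact inv_pow_le_of_rpow_div_two_le hmin (min_rpow_le_dispersionSum_floor hα hx hNx) q

theorem integrableOn_two_pow_mul_min_rpow {s : ℝ} (hs : q * s < 1) :
    IntegrableOn (fun x : ℝ => 2 ^ q * min x (1 - x) ^ (-(q * s))) (Ioo 0 1) :=
  (integrableOn_min_one_sub_rpow (neg_lt_neg hs)).const_mul (2 ^ q)

theorem integrableOn_inv_dispersion_pow (hα : 1 < α) (hqα : q * (α - 1) < 1) :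
    IntegrableOn (fun x => (dispersion α x ^ q)⁻¹) (Ioo 0 1) := by
  refine (integrableOn_two_pow_mul_min_rpow hqα).mono'
    ((continuous_dispersion hα).measurable.pow_const q).inv.aestronglyMeasurable
    (ae_restrict_of_forall_mem measurableSet_Ioo fun x hx => ?_)
  rw [norm_of_nonneg (inv_nonneg.2 (pow_nonneg (dispersion_pos hα hx).le q))]
  exact inv_pow_le_of_rpow_div_two_le (min_one_sub_pos hx) (min_rpow_le_dispersion hα hx) q

theorem integral_inv_dispersion_pow_pos (hα : 1 < α) (hqα : q * (α - 1) < 1) :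
    0 < ∫ x in (0 : ℝ)..1, (dispersion α x ^ q)⁻¹ :=
  intervalIntegral.intervalIntegral_pos_of_pos_on
    ((intervalIntegrable_iff_integrableOn_Ioo_of_le zero_le_one).2
      (integrableOn_inv_dispersion_pow hα hqα))
    (fun _ hx => inv_pos.2 (pow_pos (dispersion_pos hα hx) q)) zero_lt_one

theorem tendsto_average_inv_dispersionSum_pow (hα : 1 < α) (hq : q ≠ 0) (hqα : q * (α - 1) < 1) :
    Tendsto (fun N : ℕ => (N : ℝ)⁻¹ * ∑ k ∈ Finset.range N, (dispersionSum α N (k / N) ^ q)⁻¹) atTop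
      (𝓝 (∫ x in (0 : ℝ)..1, (dispersion α x ^ q)⁻¹)) := by
  refine tendsto_average_of_dominated_convergence
    (a := fun N k => (dispersionSum α N (k / N) ^ q)⁻¹)
    (integrableOn_two_pow_mul_min_rpow hqα) (fun N x hx => ?_) (fun x hx => ?_)
  · rw [norm_of_nonneg (inv_nonneg.2 (pow_nonneg (dispersionSum_nonneg _ _ _) q))]
    exact inv_dispersionSum_floor_pow_le hα.le hq N hx
  · exact ((tendsto_dispersionSum hα (tendsto_natFloor_mul_natCast_div hx.1.le)).pow q).inv₀
      (pow_pos (dispersion_pos hα hx) q).ne'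

/-! ### The eigenvalue sums -/

theorem sum_Icc_one_sub_one_eq_sum_range {M : Type*} [AddCommMonoid M] {f : ℕ → M} (hf : f 0 = 0)
    (n : ℕ) : ∑ j ∈ Finset.Icc 1 (n - 1), f j = ∑ j ∈ Finset.range n, f j := by
  refine Finset.sum_subset (fun j hj => ?_) fun j hj hj' => ?_
  · simp only [Finset.mem_Icc, Finset.mem_range] at hj ⊢; lia
  · have : j = 0 := by simp only [Finset.mem_Icc, Finset.mem_range] at hj hj'; lia
    rw [this, hf]

theorem lam_zero_sub_lam_s15 (α : ℝ) (n k : ℕ) :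
    lam α n 0 - lam α n k = dispersionSum α n (k / n) := by
  rw [dispersionSum, ← sum_Icc_one_sub_one_eq_sum_range (dispersionTerm_zero_right _ _), lam, lam,
    ← mul_sub, ← Finset.sum_sub_distrib, Finset.mul_sum]
  refine Finset.sum_congr rfl fun j _ => ?_
  have h : 2 * π * k * j / n = 2 * (π * (k / n) * j) := by ring
  rw [h, cos_two_mul, cos_sq', dispersionTerm, Nat.cast_zero, mul_zero, zero_mul, zero_div,
    cos_zero]
  ring

theorem one_sub_lamT (n k : ℕ) (h : dispersionSum α n ((n / 2 : ℕ) / n) ≠ 0) :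
    1 - lamT α n k = dispersionSum α n (k / n) / dispersionSum α n ((n / 2 : ℕ) / n) := by
  rw [← lam_zero_sub_lam_s15] at h
  rw [← lam_zero_sub_lam_s15, ← lam_zero_sub_lam_s15, lamT, one_sub_div h, sub_sub_sub_cancel_right]

theorem Sq_eq_mul_average (hq : q ≠ 0) {n : ℕ} (h : dispersionSum α n ((n / 2 : ℕ) / n) ≠ 0) :
    Sq q α n = dispersionSum α n ((n / 2 : ℕ) / n) ^ q *
      ((n : ℝ)⁻¹ * ∑ k ∈ Finset.range n, (dispersionSum α n (k / n) ^ q)⁻¹) := by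
  have zero_term : (dispersionSum α n ((0 : ℕ) / n) ^ q)⁻¹ = 0 := by
    rw [Nat.cast_zero, zero_div, dispersionSum_zero_right, zero_pow hq, inv_zero]
  rw [← sum_Icc_one_sub_one_eq_sum_range zero_term, mul_left_comm, Finset.mul_sum, Sq, one_div]
  simp only [one_sub_lamT n _ h, zpow_neg, zpow_natCast, div_pow, inv_div]
  simp only [div_eq_mul_inv]

theorem tendsto_natCast_half_div :
    Tendsto (fun n : ℕ => ((n / 2 : ℕ) / n : ℝ)) atTop (𝓝 (1 / 2)) := by
  refine (tendsto_natFloor_mul_natCast_div (by norm_num : (0 : ℝ) ≤ 1 / 2)).congr fun n => ?_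
  rw [mul_one_div, Nat.floor_div_ofNat, Nat.floor_natCast]

-- `Sq q α n` rounds `n / 2` down when `n` is odd, which does not affect the limit.
theorem stmt_15_general {q : ℕ} (hq : q ≠ 0) {α : ℝ} (hα : 1 < α) (hqα : q * (α - 1) < 1) :
    0 < dispersion α (1 / 2) ^ q * ∫ x in (0 : ℝ)..1, (dispersion α x ^ q)⁻¹ ∧
      Tendsto (Sq q α) atTop
        (𝓝 (dispersion α (1 / 2) ^ q * ∫ x in (0 : ℝ)..1, (dispersion α x ^ q)⁻¹)) := by
  have half_pos : 0 < dispersion α (1 / 2) := dispersion_pos hα (by norm_num)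
  have tendsto_half := tendsto_dispersionSum hα tendsto_natCast_half_div
  refine ⟨mul_pos (pow_pos half_pos q) (integral_inv_dispersion_pow_pos hα hqα), ?_⟩
  refine ((tendsto_half.pow q).mul (tendsto_average_inv_dispersionSum_pow hα hq hqα)).congr' ?_
  filter_upwards [tendsto_half.eventually_ne half_pos.ne'] with n hn
  exact (Sq_eq_mul_average hq hn).symm

end

/-- for `1 < α < 2`, `S_1(α,n)` converges to a finite positive
limit along even `n → ∞`. -/
theorem stmt_15 (α : ℝ) (h1 : 1 < α) (h2 : α < 2) :
    ∃ L : ℝ, 0 < L ∧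
      Filter.Tendsto (fun n : ℕ => Sq 1 α (2 * n)) Filter.atTop (nhds L) := by
  obtain ⟨hpos, hlim⟩ := stmt_15_general one_ne_zero h1 (by push_cast; linarith)
  exact ⟨_, hpos, hlim.comp (Filter.tendsto_id.const_mul_atTop' two_pos)⟩
end
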